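/- arXiv:1708.01113 — 7 statements merged into one kernel-verified Lean document; each statement's English description precedes it below -/
import Mathlib

section
/- Let N be a set of n k-dimensional subspaces of F_q^v that pairwise intersect trivially and whose members together span F_q^v, and for each integer i let a_i denote the number of hyperplanes H of F_q^v that contain exactly i elements of N. Then: (1) the sum over i of a_i equals (q^v−1)/(q−1); (2) the sum over i of i·a_i equals n·(q^{v−k}−1)/(q−1); (3) the sum over i of i(i−1)·a_i equals n(n−1)·(q^{v−2k}−1)/(q−1). -/
/-!
Hyperplanes through a subspace `W` of `V` are the points of the projective space of the dual of
`V ⧸ W`, so over a field with `q` elements there are `(q ^ d - 1) / (q - 1)` of them, where `d` is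
the codimension of `W`. Now count in two ways the hyperplanes, the pairs `(U, H)` with `U ∈ N`
contained in the hyperplane `H`, and the triples `(U, W, H)` with `U ≠ W` in `N` both contained
in `H`; the last condition says that `H` contains `U ⊔ W`, which has dimension `2 * k`. Since `N`
spans, no hyperplane contains all of `N`, so the index `i` only runs below `n`.
-/

open Module (finrank)
open Finset LinearAlgebra.Projectivization

section DoubleCounting

variable {α β ι : Type*}

theorem sum_mul_card_filter_eq [DecidableEq ι] {s : Finset α} {t : Finset ι} {c : α → ι}
    (hc : ∀ x ∈ s, c x ∈ t) (g : ι → ℕ) :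
    ∑ i ∈ t, g i * #{x ∈ s | c x = i} = ∑ x ∈ s, g (c x) := by
  simp only [← sum_fiberwise_of_maps_to' hc g, sum_const, smul_eq_mul, mul_comm]

theorem sum_card_bipartiteBelow_mul_pred (r : α → β → Prop)
    [∀ x y, Decidable (r x y)] (s : Finset α) (t : Finset β) :
    ∑ y ∈ t, #(s.bipartiteBelow r y) * (#(s.bipartiteBelow r y) - 1) =
      ∑ p ∈ s.offDiag, #{y ∈ t | r p.1 y ∧ r p.2 y} := by
  have offDiag_bipartiteBelow (y : β) : (s.bipartiteBelow r y).offDiag =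
      s.offDiag.bipartiteBelow (fun p y => r p.1 y ∧ r p.2 y) y := by
    ext p
    simp only [mem_offDiag, mem_bipartiteBelow]
    tauto
  simp only [Nat.mul_sub_one, ← offDiag_card, offDiag_bipartiteBelow]
  exact (sum_card_bipartiteAbove_eq_sum_card_bipartiteBelow _).symm

end DoubleCounting

section CoatomCount

variable {α : Type*}

/-- The number of coatoms lying above exactly `i` elements of `N`. In the lattice of subspaces of a
vector space the coatoms are the hyperplanes, and `coatomCount N i` is the number `a_i`. -/
noncomputable def coatomCount [PartialOrder α] [OrderTop α] (N : Finset α) (i : ℕ) : ℕ :=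
  {H : α | IsCoatom H ∧ {U | U ∈ N ∧ U ≤ H}.ncard = i}.ncard

theorem card_filter_le_lt_of_ne_top [PartialOrder α] [OrderTop α] [DecidableLE α] {N : Finset α}
    (hN : IsLUB (N : Set α) ⊤) {H : α} (hH : H ≠ ⊤) : #{U ∈ N | U ≤ H} < #N := by
  refine card_lt_card (filter_ssubset.mpr ?_)
  by_contra! hle
  exact hH (top_le_iff.mp (hN.2 hle))

open Classical in
theorem sum_mul_coatomCount_eq_sum [PartialOrder α] [OrderTop α] [Fintype α] {N : Finset α}
    (hN : IsLUB (N : Set α) ⊤) (g : ℕ → ℕ) :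
    ∑ i ∈ range #N, g i * coatomCount N i = ∑ H : α with IsCoatom H, g #{U ∈ N | U ≤ H} := by
  have coatomCount_eq_card (i : ℕ) :
      coatomCount N i = #{H ∈ {H : α | IsCoatom H} | #{U ∈ N | U ≤ H} = i} := by
    simp only [coatomCount, ← coe_filter, Set.ncard_coe_finset, filter_filter]
    rw [← Set.ncard_coe_finset, coe_filter_univ]
  simp only [coatomCount_eq_card]
  refine sum_mul_card_filter_eq (fun H hH => mem_range.mpr ?_) g
  exact card_filter_le_lt_of_ne_top hN (mem_filter.mp hH).2.ne_top

theorem sum_coatomCount [PartialOrder α] [OrderTop α] [Finite α] {N : Finset α}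
    (hN : IsLUB (N : Set α) ⊤) :
    ∑ i ∈ range #N, coatomCount N i = {H : α | IsCoatom H}.ncard := by
  classical
  have := Fintype.ofFinite α
  simpa [Set.ncard_eq_toFinset_card'] using sum_mul_coatomCount_eq_sum hN fun _ => 1

theorem sum_mul_coatomCount [PartialOrder α] [OrderTop α] [Finite α] {N : Finset α}
    (hN : IsLUB (N : Set α) ⊤) :
    ∑ i ∈ range #N, i * coatomCount N i = ∑ U ∈ N, {H | IsCoatom H ∧ U ≤ H}.ncard := by
  classical
  have := Fintype.ofFinite α
  rw [sum_mul_coatomCount_eq_sum hN fun i => i]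
  refine (sum_card_bipartiteAbove_eq_sum_card_bipartiteBelow (· ≤ ·)).symm.trans ?_
  simp [Set.ncard_eq_toFinset_card', bipartiteAbove, filter_filter]

theorem sum_mul_pred_mul_coatomCount [SemilatticeSup α] [OrderTop α] [Finite α] {N : Finset α}
    (hN : IsLUB (N : Set α) ⊤) :
    ∑ i ∈ range #N, i * (i - 1) * coatomCount N i =
      ∑ p ∈ N.offDiag, {H | IsCoatom H ∧ p.1 ⊔ p.2 ≤ H}.ncard := by
  classical
  have := Fintype.ofFinite α
  rw [sum_mul_coatomCount_eq_sum hN fun i => i * (i - 1)]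
  refine (sum_card_bipartiteBelow_mul_pred (· ≤ ·) N _).trans ?_
  simp [Set.ncard_eq_toFinset_card', filter_filter]

end CoatomCount

section Hyperplanes

theorem ncard_isCoatom_ge_eq_ncard_isCoatom_quotient {R M : Type*} [Ring R]
    [AddCommGroup M] [Module R M] (W : Submodule R M) :
    {H | IsCoatom H ∧ W ≤ H}.ncard = {H : Submodule R (M ⧸ W) | IsCoatom H}.ncard := by
  refine (Set.ncard_congr' ?_).symm
  exact (W.comapMkQRelIso.toEquiv.subtypeEquiv fun H =>
      (Submodule.isCoatom_comap_iff W.mkQ_surjective).symm).trans <|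
    (Equiv.subtypeSubtypeEquivSubtypeInter (W ≤ ·) IsCoatom).trans <|
      Equiv.subtypeEquivRight fun _ => and_comm

section DivisionRing

variable {K V : Type*} [DivisionRing K] [AddCommGroup V] [Module K V]

theorem isCoatom_iff_finrank_add_one_eq [FiniteDimensional K V] {H : Submodule K V} :
    IsCoatom H ↔ finrank K H + 1 = finrank K V := by
  rw [← isSimpleModule_iff_isCoatom, isSimpleModule_iff_finrank_eq_one,
    ← H.finrank_quotient_add_finrank]
  omega

theorem finrank_sup_of_disjoint {U W : Submodule K V}
    [FiniteDimensional K U] [FiniteDimensional K W] (h : Disjoint U W) :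
    finrank K ↥(U ⊔ W) = finrank K U + finrank K W := by
  rw [← Submodule.finrank_sup_add_finrank_inf_eq, h.eq_bot, finrank_bot, add_zero]

end DivisionRing

variable {K V : Type*} [Field K] [AddCommGroup V] [Module K V]

theorem ncard_isCoatom_eq_card_projectivization_dual [FiniteDimensional K V] :
    {H : Submodule K V | IsCoatom H}.ncard = Nat.card (ℙ K (Module.Dual K V)) := by
  have isCoatom_iff (H : Submodule K V) :
      IsCoatom H ↔ finrank K H.dualAnnihilator = 1 := by
    rw [← isSimpleModule_iff_isCoatom, isSimpleModule_iff_finrank_eq_one,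
      (Subspace.quotEquivAnnihilator H).finrank_eq]
  let dualAnnihilatorEquiv : Submodule K V ≃ Submodule K (Module.Dual K V) :=
    Subspace.orderIsoFiniteDimensional.toEquiv.trans OrderDual.ofDual
  exact Nat.card_congr <| (dualAnnihilatorEquiv.subtypeEquiv isCoatom_iff).trans
    (Projectivization.equivSubmodule K (Module.Dual K V)).symm

theorem ncard_isCoatom [Finite K] [FiniteDimensional K V] :
    {H : Submodule K V | IsCoatom H}.ncard =
      (Nat.card K ^ finrank K V - 1) / (Nat.card K - 1) := by
  rw [ncard_isCoatom_eq_card_projectivization_dual, Projectivization.card'',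
    Module.natCard_eq_pow_finrank (K := K), Subspace.dual_finrank_eq]

theorem ncard_isCoatom_ge [Finite K] (W : Submodule K V) [FiniteDimensional K (V ⧸ W)] :
    {H | IsCoatom H ∧ W ≤ H}.ncard =
      (Nat.card K ^ finrank K (V ⧸ W) - 1) / (Nat.card K - 1) := by
  rw [ncard_isCoatom_ge_eq_ncard_isCoatom_quotient, ncard_isCoatom]

end Hyperplanes

theorem vector_space_partition_hyperplane_counts_general
    {K V : Type*} [Field K] [Finite K] [AddCommGroup V] [Module K V] [FiniteDimensional K V]
    {k : ℕ} {N : Finset (Submodule K V)} (hdim : ∀ U ∈ N, finrank K U = k)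
    (hdisj : (N : Set (Submodule K V)).Pairwise Disjoint)
    (hspan : sSup (N : Set (Submodule K V)) = ⊤) :
    ∑ i ∈ range #N, coatomCount N i =
        (Nat.card K ^ finrank K V - 1) / (Nat.card K - 1) ∧
      ∑ i ∈ range #N, i * coatomCount N i =
        #N * ((Nat.card K ^ (finrank K V - k) - 1) / (Nat.card K - 1)) ∧
      ∑ i ∈ range #N, i * (i - 1) * coatomCount N i =
        #N * (#N - 1) * ((Nat.card K ^ (finrank K V - 2 * k) - 1) / (Nat.card K - 1)) := by
  have := Module.finite_of_finite K (M := V)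
  have hN : IsLUB (N : Set (Submodule K V)) ⊤ := hspan ▸ isLUB_sSup _
  refine ⟨?_, ?_, ?_⟩
  · rw [sum_coatomCount hN, ncard_isCoatom]
  · rw [sum_mul_coatomCount hN]
    refine sum_const_nat fun U hU => ?_
    rw [ncard_isCoatom_ge, Submodule.finrank_quotient, hdim U hU]
  · rw [sum_mul_pred_mul_coatomCount hN, Nat.mul_sub_one, ← offDiag_card]
    refine sum_const_nat fun ⟨U, W⟩ hUW => ?_
    obtain ⟨hU, hW, hne⟩ := mem_offDiag.mp hUW
    have hsup : finrank K ↥(U ⊔ W) = 2 * k := by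
      rw [finrank_sup_of_disjoint (hdisj hU hW hne : Disjoint U W), hdim U hU, hdim W hW, two_mul]
    rw [ncard_isCoatom_ge, Submodule.finrank_quotient, hsup]

/-- Standard double counting identities for a spanning set of `n` pairwise disjoint
`k`-subspaces of `F_q^v` and its incidences with hyperplanes. -/
theorem vector_space_partition_hyperplane_counts
    {F : Type} [Field F] [Fintype F] (q v k n : ℕ)
    (hq : q = Fintype.card F) (hk : 1 ≤ k) (hkv : k ≤ v)
    (N : Finset (Submodule F (Fin v → F))) (hn : N.card = n)
    (hdim : ∀ U ∈ N, Module.finrank F ↥U = k)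
    (hdisj : ∀ U ∈ N, ∀ W ∈ N, U ≠ W → U ⊓ W = ⊥)
    (hspan : sSup (↑N : Set (Submodule F (Fin v → F))) = ⊤)
    (a : ℕ → ℕ)
    (ha : ∀ i, a i = Set.ncard {H : Submodule F (Fin v → F) |
      Module.finrank F ↥H = v - 1 ∧
      Set.ncard {U : Submodule F (Fin v → F) | U ∈ N ∧ U ≤ H} = i}) :
    (∑ i ∈ Finset.range n, a i) = (q ^ v - 1) / (q - 1) ∧
    (∑ i ∈ Finset.range n, i * a i) = n * ((q ^ (v - k) - 1) / (q - 1)) ∧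
    (∑ i ∈ Finset.range n, i * (i - 1) * a i) =
      n * (n - 1) * ((q ^ (v - 2 * k) - 1) / (q - 1)) := by
  obtain rfl : a = coatomCount N := funext fun i => by
    simp only [ha, coatomCount, isCoatom_iff_finrank_add_one_eq, Module.finrank_fin_fun,
      eq_tsub_iff_add_eq_of_le (hk.trans hkv)]
  simpa [hq, hn] using vector_space_partition_hyperplane_counts_general hdim
    (fun U hU W hW hne => disjoint_iff.mpr (hdisj U hU W hW hne)) hspan
end

section
/- Let N be a set of k-dimensional subspaces of F_q^v that pairwise intersect trivially and whose members together span F_q^v, let a_i denote the number of hyperplanes of F_q^v containing exactly i elements of N, and suppose there is a positive integer r such that a_i = 0 for all i ≠ r, and that k < v. Then there exists an integer s ≥ 2 with v = s·k, the set N partitions F_q^v (i.e., every nonzero vector of F_q^v lies in exactly one element of N, so N is a k-spread), and r = (q^{v−k}−1)/(q^k−1). -/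
/-!
Let `n = |N|` and `v = dim V`. For a subspace `W`, count the pairs `(φ, U)` with `U ∈ N` and `φ` a
linear form vanishing on `U ⊔ W`. Since every nonzero form vanishes on exactly `r` members, this
gives `n + r (q ^ (v - dim W) - 1) = ∑ U ∈ N, q ^ (v - dim (U ⊔ W))`.

If `W` is a line, the right-hand side depends only on the number of members containing `W`, so this
number is the same for all lines; it is `1` as soon as it is `1` for one line, and then `N` is a
spread. The case `W = 0`, together with the count `n (q ^ k - 1) = q ^ v - 1` of the nonzero
vectors, gives the value of `r`; and `q ^ k - 1 ∣ q ^ v - 1` gives `k ∣ v`.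
-/

open Module Finset

/-- A finite family `N` of subspaces of a finite-dimensional space is hyperplane-regular of index
`r` if every hyperplane, encoded as a subspace of codimension one, contains exactly `r` members. -/
def IsHyperplaneRegular {F V : Type*} [Field F] [AddCommGroup V] [Module F V]
    (N : Finset (Submodule F V)) (r : ℕ) : Prop :=
  ∀ H : Submodule F V, finrank F H + 1 = finrank F V → {U | U ∈ N ∧ U ≤ H}.ncard = r

lemma dvd_of_pow_sub_one_dvd_pow_sub_one {q k v : ℕ} (hq : 2 ≤ q)
    (h : q ^ k - 1 ∣ q ^ v - 1) : k ∣ v := by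
  have hgcd : q ^ k - 1 = q ^ k.gcd v - 1 := by
    rw [← Nat.pow_sub_one_gcd_pow_sub_one, Nat.gcd_eq_left h]
  have hpow : q ^ k = q ^ k.gcd v :=
    Nat.sub_one_cancel (by positivity) (by positivity) hgcd
  exact Nat.gcd_eq_left_iff_dvd.mp (Nat.pow_right_injective hq hpow).symm

lemma le_ker_iff_mem_dualAnnihilator {R M : Type*} [CommSemiring R] [AddCommMonoid M] [Module R M]
    {U : Submodule R M} {φ : Dual R M} : U ≤ φ.ker ↔ φ ∈ U.dualAnnihilator :=
  (Submodule.mem_dualAnnihilator φ).symm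

lemma exists_ne_zero_existsUnique_mem {R M : Type*} [Semiring R] [AddCommMonoid M] [Module R M]
    {N : Set (Submodule R M)} (hdisj : N.PairwiseDisjoint id) (hN : sSup N ≠ ⊥) :
    ∃ x : M, x ≠ 0 ∧ ∃! U, U ∈ N ∧ x ∈ U := by
  obtain ⟨U, hU, hU_ne⟩ : ∃ U ∈ N, U ≠ ⊥ := by simpa [sSup_eq_bot] using hN
  obtain ⟨x, hxU, hx⟩ := U.exists_mem_ne_zero_of_ne_bot hU_ne
  refine ⟨x, hx, U, ⟨hU, hxU⟩, fun W ⟨hW, hxW⟩ ↦ hdisj.eq hW hU fun hWU ↦ hx ?_⟩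
  exact Submodule.disjoint_def.mp hWU x hxW hxU

section DoubleCounting

variable {F V : Type*} [Field F] [AddCommGroup V] [Module F V]
  {N : Finset (Submodule F V)} {k r : ℕ}

lemma isHyperplaneRegular_of_forall_ne_ncard_eq_zero [Finite (Submodule F V)]
    (h : ∀ i, i ≠ r → {H : Submodule F V | finrank F H = finrank F V - 1 ∧
      {U | U ∈ N ∧ U ≤ H}.ncard = i}.ncard = 0) : IsHyperplaneRegular N r := by
  intro H hH
  by_contra hne
  exact ((Set.ncard_eq_zero (Set.toFinite _)).mp (h _ hne)).subset ⟨Nat.eq_sub_of_add_eq hH, rfl⟩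

variable [FiniteDimensional F V]

open scoped Classical in
lemma IsHyperplaneRegular.card_filter_le_ker (hN : IsHyperplaneRegular N r) {φ : Dual F V}
    (hφ : φ ≠ 0) : #{U ∈ N | U ≤ φ.ker} = r := by
  rw [← hN φ.ker (Dual.finrank_ker_add_one_of_ne_zero hφ), ← Set.ncard_coe_finset, coe_filter]

lemma pow_finrank_sub_finrank_sup_span_singleton {M : Type*} [Monoid M] (q : M)
    {U : Submodule F V} {x : V} (hU : finrank F U < finrank F V) [Decidable (x ∈ U)] :
    q ^ (finrank F V - finrank F ↥(U ⊔ F ∙ x)) =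
      (if x ∈ U then q else 1) * q ^ (finrank F V - finrank F U - 1) := by
  split_ifs with hx
  · rw [sup_eq_left.mpr ((Submodule.span_singleton_le_iff_mem x U).mpr hx), ← pow_succ']
    congr 1
    omega
  · rw [Submodule.finrank_sup_span_singleton hx, one_mul, Nat.sub_add_eq]

lemma card_filter_mem_dualAnnihilator [Fintype (Dual F V)] (W : Submodule F V)
    [DecidablePred (· ∈ W.dualAnnihilator)] :
    #{φ : Dual F V | φ ∈ W.dualAnnihilator} = Nat.card F ^ (finrank F V - finrank F W) := by
  rw [← Subspace.finrank_add_finrank_dualAnnihilator_eq W, Nat.add_sub_cancel_left,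
    ← natCard_eq_pow_finrank (V := W.dualAnnihilator), ← Fintype.card_subtype,
    ← Nat.card_eq_fintype_card]

open scoped Classical in
lemma sum_card_filter_le_ker [Fintype (Dual F V)] (N : Finset (Submodule F V)) (W : Submodule F V) :
    ∑ φ : Dual F V with φ ∈ W.dualAnnihilator, #{U ∈ N | U ≤ φ.ker} =
      ∑ U ∈ N, Nat.card F ^ (finrank F V - finrank F ↥(U ⊔ W)) := by
  refine (sum_card_bipartiteAbove_eq_sum_card_bipartiteBelow fun (φ : Dual F V) U ↦
    U ≤ φ.ker).trans (sum_congr rfl fun U _ ↦ ?_)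
  simp only [← card_filter_mem_dualAnnihilator, bipartiteBelow, filter_filter,
    le_ker_iff_mem_dualAnnihilator, Submodule.dualAnnihilator_sup_eq, Submodule.mem_inf, and_comm]

variable [Finite F]

lemma IsHyperplaneRegular.card_add_mul_eq_sum (hN : IsHyperplaneRegular N r)
    (W : Submodule F V) :
    #N + r * (Nat.card F ^ (finrank F V - finrank F W) - 1) =
      ∑ U ∈ N, Nat.card F ^ (finrank F V - finrank F ↥(U ⊔ W)) := by
  classical
  have : Finite (Dual F V) := finite_of_finite F
  let _ : Fintype (Dual F V) := Fintype.ofFinite _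
  have hzero : (0 : Dual F V) ∈ ({φ | φ ∈ W.dualAnnihilator} : Finset (Dual F V)) := by simp
  have hsum : ∑ φ ∈ ({φ | φ ∈ W.dualAnnihilator} : Finset (Dual F V)).erase 0,
      #{U ∈ N | U ≤ φ.ker} = (Nat.card F ^ (finrank F V - finrank F W) - 1) * r := by
    rw [sum_const_nat fun φ hφ ↦ hN.card_filter_le_ker (ne_of_mem_erase hφ),
      card_erase_of_mem hzero, card_filter_mem_dualAnnihilator]
  rw [← sum_card_filter_le_ker, ← add_sum_erase _ _ hzero, hsum, mul_comm r]
  simp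

lemma IsHyperplaneRegular.card_add_mul_eq_card_mul (hN : IsHyperplaneRegular N r)
    (hdim : ∀ U ∈ N, finrank F U = k) :
    #N + r * (Nat.card F ^ finrank F V - 1) = #N * Nat.card F ^ (finrank F V - k) := by
  have hcount := hN.card_add_mul_eq_sum ⊥
  rw [finrank_bot, Nat.sub_zero] at hcount
  rw [hcount]
  exact sum_const_nat fun U hU ↦ by rw [sup_bot_eq, hdim U hU]

open scoped Classical in
lemma IsHyperplaneRegular.card_add_mul_eq_mul_pow (hN : IsHyperplaneRegular N r)
    (hdim : ∀ U ∈ N, finrank F U = k) (hk : k < finrank F V) {x : V} (hx : x ≠ 0) :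
    #N + r * (Nat.card F ^ (finrank F V - 1) - 1) =
      (#{U ∈ N | x ∈ U} * Nat.card F + #{U ∈ N | x ∉ U}) * Nat.card F ^ (finrank F V - k - 1) := by
  calc #N + r * (Nat.card F ^ (finrank F V - 1) - 1)
    _ = ∑ U ∈ N, Nat.card F ^ (finrank F V - finrank F ↥(U ⊔ F ∙ x)) := by
      rw [← hN.card_add_mul_eq_sum, finrank_span_singleton hx]
    _ = ∑ U ∈ N, (if x ∈ U then Nat.card F else 1) * Nat.card F ^ (finrank F V - k - 1) :=
      sum_congr rfl fun U hU ↦ by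
        rw [pow_finrank_sub_finrank_sup_span_singleton _ (hdim U hU ▸ hk), hdim U hU]
    _ = _ := by
      rw [← sum_mul, sum_ite, sum_const, sum_const, smul_eq_mul, smul_eq_mul, mul_one]

open scoped Classical in
lemma IsHyperplaneRegular.card_filter_mem_eq (hN : IsHyperplaneRegular N r)
    (hdim : ∀ U ∈ N, finrank F U = k) (hk : k < finrank F V) {x y : V} (hx : x ≠ 0) (hy : y ≠ 0) :
    #{U ∈ N | x ∈ U} = #{U ∈ N | y ∈ U} := by
  have hq : 1 < Nat.card F := Finite.one_lt_card
  have hweights : #{U ∈ N | x ∈ U} * Nat.card F + #{U ∈ N | x ∉ U} =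
      #{U ∈ N | y ∈ U} * Nat.card F + #{U ∈ N | y ∉ U} :=
    Nat.eq_of_mul_eq_mul_right (by positivity) <|
      (hN.card_add_mul_eq_mul_pow hdim hk hx).symm.trans (hN.card_add_mul_eq_mul_pow hdim hk hy)
  have hcard_x := card_filter_add_card_filter_not (s := N) (x ∈ ·)
  have hcard_y := card_filter_add_card_filter_not (s := N) (y ∈ ·)
  refine Nat.eq_of_mul_eq_mul_right (Nat.sub_pos_of_lt hq) ?_
  rw [Nat.mul_sub_one, Nat.mul_sub_one]
  omega

lemma card_mul_pow_sub_one_eq {t : ℕ} [DecidableRel fun (x : V) (U : Submodule F V) ↦ x ∈ U]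
    (hdim : ∀ U ∈ N, finrank F U = k) (ht : ∀ x : V, x ≠ 0 → #{U ∈ N | x ∈ U} = t) :
    #N * (Nat.card F ^ k - 1) = (Nat.card F ^ finrank F V - 1) * t := by
  classical
  have : Finite V := finite_of_finite F
  let _ : Fintype V := Fintype.ofFinite V
  have hmember : ∀ U ∈ N, #{x ∈ univ.erase (0 : V) | x ∈ U} = Nat.card F ^ k - 1 := by
    intro U hU
    rw [filter_erase, card_erase_of_mem (by simp), ← Fintype.card_subtype,
      ← Nat.card_eq_fintype_card, ← hdim U hU, ← natCard_eq_pow_finrank]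
  calc #N * (Nat.card F ^ k - 1)
    _ = ∑ U ∈ N, #{x ∈ univ.erase (0 : V) | x ∈ U} := (sum_const_nat hmember).symm
    _ = ∑ x ∈ univ.erase (0 : V), #{U ∈ N | x ∈ U} :=
      (sum_card_bipartiteAbove_eq_sum_card_bipartiteBelow fun (x : V) U ↦ x ∈ U).symm
    _ = (Nat.card F ^ finrank F V - 1) * t := by
      rw [sum_const_nat fun x hx ↦ ht x (ne_of_mem_erase hx), card_erase_of_mem (mem_univ _),
        card_univ, ← Nat.card_eq_fintype_card, natCard_eq_pow_finrank (K := F)]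

lemma IsHyperplaneRegular.mul_pow_sub_one_eq (hN : IsHyperplaneRegular N r)
    (hdim : ∀ U ∈ N, finrank F U = k) (hne : N.Nonempty)
    (hcard : #N * (Nat.card F ^ k - 1) = Nat.card F ^ finrank F V - 1) :
    r * (Nat.card F ^ k - 1) = Nat.card F ^ (finrank F V - k) - 1 := by
  have hforms : #N * (1 + r * (Nat.card F ^ k - 1)) = #N * Nat.card F ^ (finrank F V - k) := by
    rw [← hN.card_add_mul_eq_card_mul hdim, ← hcard]
    ring
  rw [← Nat.eq_of_mul_eq_mul_left hne.card_pos hforms, Nat.add_sub_cancel_left]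

theorem one_hyperplane_type_implies_spread_general (hN : IsHyperplaneRegular N r)
    (hdim : ∀ U ∈ N, finrank F U = k) (hk : k < finrank F V)
    (hpoint : ∃ x : V, x ≠ 0 ∧ ∃! U, U ∈ N ∧ x ∈ U) :
    ∃ s : ℕ, 2 ≤ s ∧ finrank F V = s * k ∧ (∀ x : V, x ≠ 0 → ∃! U, U ∈ N ∧ x ∈ U) ∧
      r = (Nat.card F ^ (finrank F V - k) - 1) / (Nat.card F ^ k - 1) := by
  classical
  obtain ⟨x₀, hx₀, U₀, ⟨hU₀, hx₀U₀⟩, hU₀_unique⟩ := hpoint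
  have hq : 1 < Nat.card F := Finite.one_lt_card
  have hk_pos : k ≠ 0 := by
    rintro rfl
    rw [Submodule.finrank_eq_zero.mp (hdim U₀ hU₀)] at hx₀U₀
    exact hx₀ hx₀U₀
  have hone : ∀ x : V, x ≠ 0 → #{U ∈ N | x ∈ U} = 1 := fun x hx ↦ by
    rw [hN.card_filter_mem_eq hdim hk hx hx₀, card_eq_one_iff_existsUnique]
    exact ⟨U₀, by simp [hU₀, hx₀U₀], by simpa using hU₀_unique⟩
  have hvectors : #N * (Nat.card F ^ k - 1) = Nat.card F ^ finrank F V - 1 := by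
    simpa using card_mul_pow_sub_one_eq hdim hone
  obtain ⟨s, hs⟩ : k ∣ finrank F V :=
    dvd_of_pow_sub_one_dvd_pow_sub_one hq (hvectors ▸ dvd_mul_left ..)
  have hr : r * (Nat.card F ^ k - 1) = Nat.card F ^ (finrank F V - k) - 1 :=
    hN.mul_pow_sub_one_eq hdim ⟨U₀, hU₀⟩ hvectors
  refine ⟨s, ?_, hs.trans (mul_comm k s), fun x hx ↦ ?_, ?_⟩
  · exact (Nat.lt_mul_iff_one_lt_right (by omega)).mp (hs ▸ hk)
  · simpa [card_eq_one_iff_existsUnique] using hone x hx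
  · exact Nat.eq_div_of_mul_eq_left (Nat.sub_pos_of_lt (Nat.one_lt_pow hk_pos hq)).ne' hr

end DoubleCounting

/-- If every hyperplane of `F_q^v` contains exactly `r > 0` elements of a spanning set `N`
of pairwise disjoint `k`-subspaces (with `k < v`), then `v = s·k` for some `s ≥ 2`,
`N` is a `k`-spread of `F_q^v`, and `r = (q^{v-k}-1)/(q^k-1)`. -/
theorem one_hyperplane_type_implies_spread
    {F : Type} [Field F] [Fintype F] (q v k r : ℕ)
    (hq : q = Fintype.card F) (hk : 1 ≤ k) (hkv : k < v) (hr : 0 < r)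
    (N : Finset (Submodule F (Fin v → F)))
    (hdim : ∀ U ∈ N, Module.finrank F ↥U = k)
    (hdisj : ∀ U ∈ N, ∀ W ∈ N, U ≠ W → U ⊓ W = ⊥)
    (hspan : sSup (↑N : Set (Submodule F (Fin v → F))) = ⊤)
    (a : ℕ → ℕ)
    (ha : ∀ i, a i = Set.ncard {H : Submodule F (Fin v → F) |
      Module.finrank F ↥H = v - 1 ∧
      Set.ncard {U : Submodule F (Fin v → F) | U ∈ N ∧ U ≤ H} = i})
    (ha0 : ∀ i, i ≠ r → a i = 0) :
    ∃ s : ℕ, 2 ≤ s ∧ v = s * k ∧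
      (∀ x : Fin v → F, x ≠ 0 →
        ∃! U : Submodule F (Fin v → F), U ∈ N ∧ x ∈ U) ∧
      r = (q ^ (v - k) - 1) / (q ^ k - 1) := by
  subst hq
  have hregular : IsHyperplaneRegular N r :=
    isHyperplaneRegular_of_forall_ne_ncard_eq_zero fun i hi ↦ by simpa [ha] using ha0 i hi
  have : NeZero v := ⟨by omega⟩
  have hpoint := exists_ne_zero_existsUnique_mem (N := ↑N)
    (fun U hU W hW hUW ↦ disjoint_iff.mpr (hdisj U hU W hW hUW)) (by simp [hspan])
  simpa using one_hyperplane_type_implies_spread_general hregular hdim (by simpa using hkv) hpoint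
end

section
/- Let N be a q^r-divisible set of n k-dimensional subspaces of F_q^v whose members together span F_q^v, and let m be any integer. Then, with u = q^k and Δ = q^r, the rational-number inequality τ(n, Δ, u, m) · q^{v−2k−2r} − m(m−1) ≥ 0 holds, where τ(n, Δ, u, m) := Δ²u²m(m−1) − n(2m−1)u(u−1)Δ + n(u−1)(n(u−1)+1). -/
/-!
For a linear functional `f` let `c f` be the number of members of `N` contained in `ker f`, and put
`n = #N`. Divisibility makes `n - c f` a multiple of `Δ` for every `f ≠ 0`, and it vanishes for
`f = 0`. The quadratic `(x - m * Δ) * (x - (m - 1) * Δ)` is nonnegative at the multiples of `Δ`,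
since its roots are consecutive such multiples, and equals `m * (m - 1) * Δ ^ 2` at `x = 0`. Hence
`m * (m - 1) * Δ ^ 2` is at most the sum of its values at `x = n - c f` over all `f`. As the members
of `N` meet trivially in pairs, the first two moments of `c` depend only on `n`, `#V` and the
common cardinality `u` of the members of `N`, and the sum evaluates to `τ(n, Δ, u, m) * #V / u ^ 2`.
-/

namespace SubspaceDivisibility

open Finset

section Annihilator

variable {F V : Type*} [Field F] [AddCommGroup V] [Module F V] [Module.Finite F V]

theorem card_dualAnnihilator_mul_card (U : Submodule F V) :
    Nat.card U.dualAnnihilator * Nat.card U = Nat.card V := by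
  rw [Module.natCard_eq_pow_finrank (K := F), Module.natCard_eq_pow_finrank (K := F) (V := U),
    Module.natCard_eq_pow_finrank (K := F) (V := V), ← pow_add, add_comm,
    Subspace.finrank_add_finrank_dualAnnihilator_eq]

theorem card_sup_of_disjoint {U W : Submodule F V} (h : Disjoint U W) :
    Nat.card ↥(U ⊔ W) = Nat.card U * Nat.card W := by
  have h_finrank := Submodule.finrank_sup_add_finrank_inf_eq U W
  rw [h.eq_bot, finrank_bot, add_zero] at h_finrank
  rw [Module.natCard_eq_pow_finrank (K := F), h_finrank, pow_add,
    ← Module.natCard_eq_pow_finrank, ← Module.natCard_eq_pow_finrank]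

theorem card_dual : Nat.card (Module.Dual F V) = Nat.card V := by
  rw [Module.natCard_eq_pow_finrank (K := F), Subspace.dual_finrank_eq,
    ← Module.natCard_eq_pow_finrank]

end Annihilator

theorem sum_sub_sub_mul_sub_sub {R ι : Type*} [CommRing R] (s : Finset ι) (c : ι → R) (n a b : R) :
    ∑ i ∈ s, (n - c i - a) * (n - c i - b) =
      ∑ i ∈ s, c i ^ 2 - (2 * n - a - b) * ∑ i ∈ s, c i + #s * ((n - a) * (n - b)) := by
  rw [mul_sum, ← sum_sub_distrib, ← nsmul_eq_mul, ← sum_const, ← sum_add_distrib]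
  exact sum_congr rfl fun i _ ↦ by ring

/-- The polynomial `τ(n, Δ, u, m)` of the quadratic criterion, over an arbitrary commutative ring so
that it can be used both in `ℤ` and in `ℚ`. -/
def tau {R : Type*} [CommRing R] (n Δ u m : R) : R :=
  Δ ^ 2 * u ^ 2 * m * (m - 1) - n * (2 * m - 1) * u * (u - 1) * Δ
    + n * (u - 1) * (n * (u - 1) + 1)

section Moments

open scoped Classical in
theorem sum_card_filter_le_ker {R M ι : Type*} [CommSemiring R] [AddCommMonoid M] [Module R M]
    [Fintype (Module.Dual R M)] (s : Finset ι) (g : ι → Submodule R M) :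
    ∑ f : Module.Dual R M, #{i ∈ s | g i ≤ LinearMap.ker f} =
      ∑ i ∈ s, Nat.card (g i).dualAnnihilator := by
  calc
    _ = ∑ i ∈ s, #{f : Module.Dual R M | g i ≤ LinearMap.ker f} :=
      sum_card_bipartiteAbove_eq_sum_card_bipartiteBelow fun f i ↦ g i ≤ LinearMap.ker f
    _ = ∑ i ∈ s, Nat.card (g i).dualAnnihilator := by
      refine sum_congr rfl fun i _ ↦ ?_
      rw [Nat.subtype_card]
      simp [SetLike.le_def, Submodule.mem_dualAnnihilator]

open scoped Classical in
/-- The number of members of the set `N` of subspaces that are contained in the subspace `H`. -/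
noncomputable def numBelow {R M : Type*} [Semiring R] [AddCommMonoid M] [Module R M]
    (N : Finset (Submodule R M)) (H : Submodule R M) : ℕ :=
  #{U ∈ N | U ≤ H}

theorem numBelow_eq_ncard {R M : Type*} [Semiring R] [AddCommMonoid M] [Module R M]
    (N : Finset (Submodule R M)) (H : Submodule R M) :
    numBelow N H = {U | U ∈ N ∧ U ≤ H}.ncard := by
  rw [numBelow, ← Set.ncard_coe_finset, coe_filter]

variable {F V : Type*} [Field F] [AddCommGroup V] [Module F V]

theorem sum_numBelow_ker [Fintype (Module.Dual F V)] (N : Finset (Submodule F V)) :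
    ∑ f : Module.Dual F V, numBelow N (LinearMap.ker f) = ∑ U ∈ N, Nat.card U.dualAnnihilator :=
  sum_card_filter_le_ker N id

theorem sum_numBelow_ker_sq [Fintype (Module.Dual F V)] (N : Finset (Submodule F V)) :
    ∑ f : Module.Dual F V, numBelow N (LinearMap.ker f) ^ 2 =
      ∑ p ∈ N ×ˢ N, Nat.card (p.1 ⊔ p.2).dualAnnihilator := by
  classical
  rw [← sum_card_filter_le_ker]
  refine sum_congr rfl fun f _ ↦ ?_
  simp only [numBelow, sq, ← card_product, ← filter_product, sup_le_iff]

variable [Module.Finite F V] [Fintype (Module.Dual F V)] {N : Finset (Submodule F V)} {u : ℕ}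

theorem sum_numBelow_ker_mul (hu : ∀ U ∈ N, Nat.card U = u) :
    (∑ f : Module.Dual F V, numBelow N (LinearMap.ker f)) * u = #N * Nat.card V := by
  rw [sum_numBelow_ker, sum_mul, ← smul_eq_mul]
  refine sum_eq_card_nsmul fun U hU ↦ ?_
  rw [← hu U hU, card_dualAnnihilator_mul_card]

theorem sum_numBelow_ker_sq_mul (hu : ∀ U ∈ N, Nat.card U = u)
    (hN : (N : Set (Submodule F V)).Pairwise Disjoint) :
    (∑ f : Module.Dual F V, numBelow N (LinearMap.ker f) ^ 2) * u ^ 2 =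
      #N * u * Nat.card V + (#N * #N - #N) * Nat.card V := by
  classical
  have h_diag : ∀ U ∈ N, Nat.card (U ⊔ U).dualAnnihilator * u ^ 2 = u * Nat.card V := by
    intro U hU
    rw [sup_idem, ← card_dualAnnihilator_mul_card U, hu U hU]
    ring
  have h_offDiag : ∀ p ∈ N.offDiag,
      Nat.card (p.1 ⊔ p.2).dualAnnihilator * u ^ 2 = Nat.card V := by
    rintro ⟨U, W⟩ hUW
    obtain ⟨hU, hW, hne⟩ := mem_offDiag.mp hUW
    rw [← card_dualAnnihilator_mul_card (U ⊔ W), card_sup_of_disjoint (hN hU hW hne),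
      hu U hU, hu W hW, sq]
  rw [sum_numBelow_ker_sq, sum_mul, ← diag_union_offDiag, sum_union (disjoint_diag_offDiag N),
    sum_diag, sum_eq_card_nsmul h_diag, sum_eq_card_nsmul h_offDiag, offDiag_card]
  simp only [smul_eq_mul, mul_assoc]

theorem sum_mul_sq_eq_tau_mul_card (hu : ∀ U ∈ N, Nat.card U = u)
    (hN : (N : Set (Submodule F V)).Pairwise Disjoint) (d m : ℤ) :
    (∑ f : Module.Dual F V, ((#N - numBelow N (LinearMap.ker f) : ℤ) - m * d) *
        (#N - numBelow N (LinearMap.ker f) - (m - 1) * d)) * u ^ 2 =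
      tau (#N : ℤ) d u m * Nat.card V := by
  have h_moment₀ : (Fintype.card (Module.Dual F V) : ℤ) = Nat.card V := by
    rw [Fintype.card_eq_nat_card, card_dual]
  have h_moment₁ : (∑ f : Module.Dual F V, (numBelow N (LinearMap.ker f) : ℤ)) * u =
      #N * Nat.card V := mod_cast sum_numBelow_ker_mul hu
  have h_moment₂ : (∑ f : Module.Dual F V, (numBelow N (LinearMap.ker f) : ℤ) ^ 2) * u ^ 2 =
      #N * u * Nat.card V + (#N * #N - #N) * Nat.card V := by
    have h := sum_numBelow_ker_sq_mul hu hN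
    zify [Nat.le_mul_self] at h
    exact h
  rw [sum_sub_sub_mul_sub_sub, card_univ, h_moment₀, tau]
  linear_combination h_moment₂ - (2 * #N - m * d - (m - 1) * d) * u * h_moment₁

end Moments

theorem sub_mul_mul_sub_mul_nonneg_of_dvd {a d : ℤ} (h : d ∣ a) (m : ℤ) :
    0 ≤ (a - m * d) * (a - (m - 1) * d) := by
  obtain ⟨z, rfl⟩ := h
  have h_consecutive : 0 ≤ (m - z) ^ 2 - (m - z) := sub_nonneg.mpr (Int.le_self_sq _)
  calc
    0 ≤ d ^ 2 * ((m - z) ^ 2 - (m - z)) := by positivity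
    _ = (d * z - m * d) * (d * z - (m - 1) * d) := by ring

/-- A `Δ`-divisible set of subspaces: its members pairwise intersect trivially, and modulo `Δ` every
hyperplane contains as many of them as there are in total. Hyperplanes are encoded by
`finrank F H + 1 = finrank F V`, so that the zero space has none. -/
structure IsDivisible {F V : Type*} [Field F] [AddCommGroup V] [Module F V] (Δ : ℕ)
    (N : Finset (Submodule F V)) : Prop where
  pairwise_disjoint : (N : Set (Submodule F V)).Pairwise Disjoint
  card_modEq : ∀ H : Submodule F V, Module.finrank F H + 1 = Module.finrank F V →
    #N ≡ numBelow N H [MOD Δ]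

namespace IsDivisible

variable {F V : Type*} [Field F] [AddCommGroup V] [Module F V] [Module.Finite F V]
  {N : Finset (Submodule F V)} {Δ u : ℕ}

theorem dvd_card_sub_numBelow_ker (hN : IsDivisible Δ N) (f : Module.Dual F V) :
    (Δ : ℤ) ∣ #N - numBelow N (LinearMap.ker f) := by
  rcases eq_or_ne f 0 with rfl | hf
  · simp [numBelow]
  · exact (hN.card_modEq _ (Module.Dual.finrank_ker_add_one_of_ne_zero hf)).symm.dvd

theorem mul_sub_one_mul_sq_le_sum [Fintype (Module.Dual F V)] (hN : IsDivisible Δ N) (m : ℤ) :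
    m * (m - 1) * Δ ^ 2 ≤ ∑ f : Module.Dual F V,
      ((#N - numBelow N (LinearMap.ker f) : ℤ) - m * Δ) *
        (#N - numBelow N (LinearMap.ker f) - (m - 1) * Δ) := by
  have h_zero := single_le_sum
    (fun f _ ↦ sub_mul_mul_sub_mul_nonneg_of_dvd (hN.dvd_card_sub_numBelow_ker f) m)
    (mem_univ (0 : Module.Dual F V))
  refine le_of_eq_of_le ?_ h_zero
  simp only [numBelow, LinearMap.ker_zero, le_top, filter_true]
  ring

theorem mul_sub_one_mul_sq_le_tau_mul_card [Finite F] (hN : IsDivisible Δ N)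
    (hu : ∀ U ∈ N, Nat.card U = u) (m : ℤ) :
    m * (m - 1) * (Δ * u) ^ 2 ≤ tau (#N : ℤ) Δ u m * Nat.card V := by
  have : Finite (Module.Dual F V) := Module.finite_of_finite F
  have := Fintype.ofFinite (Module.Dual F V)
  calc
    m * (m - 1) * ((Δ : ℤ) * u) ^ 2 = m * (m - 1) * Δ ^ 2 * u ^ 2 := by ring
    _ ≤ (∑ f : Module.Dual F V, ((#N - numBelow N (LinearMap.ker f) : ℤ) - m * Δ) *
          (#N - numBelow N (LinearMap.ker f) - (m - 1) * Δ)) * u ^ 2 := by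
      gcongr
      exact hN.mul_sub_one_mul_sq_le_sum m
    _ = tau (#N : ℤ) Δ u m * Nat.card V := sum_mul_sq_eq_tau_mul_card hu hN.pairwise_disjoint Δ m

end IsDivisible

theorem zpow_sub_two_mul {G₀ : Type*} [GroupWithZero G₀] {a : G₀} (ha : a ≠ 0) (i : ℤ) (k : ℕ) :
    a ^ (i - 2 * k) = a ^ i / (a ^ k) ^ 2 := by
  rw [zpow_sub₀ ha, mul_comm, zpow_mul, zpow_natCast, zpow_ofNat]

end SubspaceDivisibility

open Finset SubspaceDivisibility in
theorem divisible_set_quadratic_criterion_general {F V : Type*} [Field F] [Finite F]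
    [AddCommGroup V] [Module F V] [Module.Finite F V] {N : Finset (Submodule F V)} {Δ k : ℕ}
    (hΔ : Δ ≠ 0) (hN : IsDivisible Δ N) (hdim : ∀ U ∈ N, Module.finrank F U = k) (m : ℤ) :
    0 ≤ tau (#N : ℚ) Δ (Nat.card F ^ k) m *
          ((Nat.card F : ℚ) ^ ((Module.finrank F V : ℤ) - 2 * k) / Δ ^ 2)
        - m * (m - 1) := by
  have hq : 0 < (Nat.card F : ℚ) := mod_cast Nat.card_pos
  have h_card : ∀ U ∈ N, Nat.card U = Nat.card F ^ k := fun U hU ↦ by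
    rw [Module.natCard_eq_pow_finrank (K := F), hdim U hU]
  have h_int := hN.mul_sub_one_mul_sq_le_tau_mul_card h_card m
  have h_rat : (m * (m - 1) : ℚ) * (Δ * Nat.card F ^ k) ^ 2 ≤
      tau (#N : ℚ) Δ (Nat.card F ^ k) m * Nat.card F ^ Module.finrank F V := by
    rw [Module.natCard_eq_pow_finrank (K := F) (V := V)] at h_int
    unfold tau at h_int ⊢
    exact_mod_cast h_int
  rw [← le_div_iff₀ (by positivity)] at h_rat
  rwa [sub_nonneg, zpow_sub_two_mul hq.ne', zpow_natCast, div_div, ← mul_pow, ← mul_div_assoc,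
    mul_comm _ (Δ : ℚ)]

/-- Quadratic criterion: for a spanning `q^r`-divisible set `N` of `n` `k`-subspaces of
`F_q^v` and any integer `m`, with `u = q^k`, `Δ = q^r`, one has
`τ(n,Δ,u,m)·q^{v-2k-2r} - m(m-1) ≥ 0`, where
`τ(n,Δ,u,m) = Δ²u²m(m-1) - n(2m-1)u(u-1)Δ + n(u-1)(n(u-1)+1)`. -/
theorem divisible_set_quadratic_criterion
    {F : Type} [Field F] [Fintype F] (q v k r n : ℕ)
    (hq : q = Fintype.card F) (hk : 1 ≤ k) (hr : 1 ≤ r)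
    (N : Finset (Submodule F (Fin v → F))) (hn : N.card = n)
    (hdim : ∀ U ∈ N, Module.finrank F ↥U = k)
    (hdisj : ∀ U ∈ N, ∀ W ∈ N, U ≠ W → U ⊓ W = ⊥)
    (hspan : sSup (↑N : Set (Submodule F (Fin v → F))) = ⊤)
    (hdiv : ∀ H : Submodule F (Fin v → F), Module.finrank F ↥H = v - 1 →
      n ≡ Set.ncard {U : Submodule F (Fin v → F) | U ∈ N ∧ U ≤ H} [MOD q ^ r])
    (m : ℤ) :
    (((q : ℚ) ^ r) ^ 2 * ((q : ℚ) ^ k) ^ 2 * (m : ℚ) * ((m : ℚ) - 1)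
        - (n : ℚ) * (2 * (m : ℚ) - 1) * (q : ℚ) ^ k * ((q : ℚ) ^ k - 1) * (q : ℚ) ^ r
        + (n : ℚ) * ((q : ℚ) ^ k - 1) * ((n : ℚ) * ((q : ℚ) ^ k - 1) + 1))
      * (q : ℚ) ^ ((v : ℤ) - 2 * (k : ℤ) - 2 * (r : ℤ))
      - (m : ℚ) * ((m : ℚ) - 1) ≥ 0 := by
  subst hq hn
  have hN : SubspaceDivisibility.IsDivisible (Fintype.card F ^ r) N :=
    ⟨fun U hU W hW hne ↦ disjoint_iff.mpr (hdisj U hU W hW hne), fun H hH ↦ by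
      rw [SubspaceDivisibility.numBelow_eq_ncard]
      exact hdiv H (by rw [Module.finrank_fin_fun] at hH; lia)⟩
  have hq : (Fintype.card F : ℚ) ≠ 0 := mod_cast Fintype.card_ne_zero
  rw [ge_iff_le, SubspaceDivisibility.zpow_sub_two_mul hq]
  simpa only [SubspaceDivisibility.tau, Nat.card_eq_fintype_card, Module.finrank_fin_fun,
    Nat.cast_pow] using
    divisible_set_quadratic_criterion_general (pow_ne_zero r Fintype.card_ne_zero) hN hdim m
end

section
/- Let N be a q-divisible set of k-dimensional subspaces of F_q^v whose members together span F_q^v, and suppose #N = q^k + 1. Then v = 2k and N partitions F_q^v, i.e., every nonzero vector of F_q^{2k} is contained in exactly one element of N (so N is a k-spread of F_q^{2k}). -/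
/-!
If every hyperplane contains a member of `N`, then the annihilators of the members of `N` cover the
dual space. So it suffices to understand how `n + 1` subgroups `A i` of index `n` can cover a finite
group. Fix `j`. Since `|A i ⊓ A j| ≥ |A j| / n`, the `n` sets `A i \ A j` have together at most
`(n - 1) |A j|` elements, which is the size of the complement of `A j` that they cover. Hence all
these estimates are equalities: `A i ⊓ A j` has index `n ^ 2`, and the sets `A i \ A j` are pairwise
disjoint, that is, any two of the subgroups have the same intersection.

Dually, any two members of `N` span the same `2k`-dimensional space, so they intersect trivially.
Then the `q ^ k + 1` members have together exactly as many nonzero vectors as that space.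
-/

open Module

theorem pairwiseDisjoint_of_sum_ncard_le_ncard_biUnion {ι α : Type*} [Finite α] {s : Finset ι}
    {B : ι → Set α} (h : ∑ i ∈ s, (B i).ncard ≤ (⋃ i ∈ s, B i).ncard) :
    (s : Set ι).PairwiseDisjoint B := by
  classical
  intro i hi j hj hij
  set rest := ⋃ l ∈ s.erase i, B l
  have hunion : ⋃ l ∈ s, B l = B i ∪ rest := by
    rw [← Finset.set_biUnion_insert, Finset.insert_erase hi]
  have hrest : rest.ncard ≤ ∑ l ∈ s.erase i, (B l).ncard := Finset.set_ncard_biUnion_le _ _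
  have hinter : (B i ∩ rest).ncard = 0 := by
    have := Set.ncard_union_add_ncard_inter (B i) rest
    have := Finset.add_sum_erase s (fun l ↦ (B l).ncard) hi
    rw [hunion] at h
    omega
  have hdisj : Disjoint (B i) rest :=
    Set.disjoint_iff_inter_eq_empty.2 ((Set.ncard_eq_zero).1 hinter)
  exact hdisj.mono_right
    (Set.subset_biUnion_of_mem (u := B) (Finset.mem_coe.2 (Finset.mem_erase.2 ⟨hij.symm, hj⟩)))

section Subgroup

variable {ι G : Type*} [Group G] {s : Finset ι} {A : ι → Subgroup G} {n : ℕ}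

@[to_additive]
theorem biUnion_subgroup_sdiff_eq_compl [DecidableEq ι] (hcover : ∀ g, ∃ i ∈ s, g ∈ A i) (j : ι) :
    ⋃ i ∈ s.erase j, (A i : Set G) \ A j = (A j : Set G)ᶜ := by
  ext g
  simp only [Set.mem_iUnion, Set.mem_sdiff, SetLike.mem_coe, Set.mem_compl_iff, exists_prop]
  refine ⟨fun ⟨_, _, _, hgj⟩ ↦ hgj, fun hgj ↦ ?_⟩
  obtain ⟨i, hi, hgi⟩ := hcover g
  exact ⟨i, Finset.mem_erase.2 ⟨fun h ↦ hgj (h ▸ hgi), hi⟩, hgi, hgj⟩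

variable [Finite G]

@[to_additive]
theorem subgroup_card_le_index_mul_card_inf (H K : Subgroup G) :
    Nat.card K ≤ H.index * Nat.card ↥(H ⊓ K) := by
  refine Nat.le_of_mul_le_mul_left ?_ (Nat.pos_of_ne_zero K.index_ne_zero_of_finite)
  calc K.index * Nat.card K = (H ⊓ K).index * Nat.card ↥(H ⊓ K) := by
        rw [Subgroup.index_mul_card, Subgroup.index_mul_card]
    _ ≤ H.index * K.index * Nat.card ↥(H ⊓ K) := Nat.mul_le_mul_right _ Subgroup.index_inf_le
    _ = K.index * (H.index * Nat.card ↥(H ⊓ K)) := by ring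

@[to_additive]
theorem subgroup_card_inf_add_ncard_sdiff (H K : Subgroup G) :
    Nat.card ↥(H ⊓ K) + ((H : Set G) \ K).ncard = Nat.card H :=
  Set.ncard_inter_add_ncard_sdiff_eq_ncard (H : Set G) K

@[to_additive]
theorem subgroup_card_add_ncard_compl (H : Subgroup G) :
    Nat.card H + ((H : Set G)ᶜ).ncard = H.index * Nat.card H := by
  rw [H.index_mul_card]
  exact Set.ncard_add_ncard_compl (H : Set G)

@[to_additive]
theorem subgroup_card_eq_of_index_eq {H K : Subgroup G} (h : H.index = K.index) :
    Nat.card H = Nat.card K := by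
  refine Nat.eq_of_mul_eq_mul_left (Nat.pos_of_ne_zero H.index_ne_zero_of_finite) ?_
  rw [H.index_mul_card, h, K.index_mul_card]

@[to_additive]
theorem exists_mem_of_pairwiseDisjoint_subgroup {H : Subgroup G} (hcard : s.card = n + 1)
    (hA : ∀ i ∈ s, Nat.card (A i) = n) (hdisj : (s : Set ι).PairwiseDisjoint A)
    (hle : ∀ i ∈ s, A i ≤ H) (hH : Nat.card H = n ^ 2) {g : G} (hg : g ∈ H) :
    ∃ i ∈ s, g ∈ A i := by
  obtain rfl | hg1 := eq_or_ne g 1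
  · obtain ⟨i, hi⟩ := Finset.card_pos.1 (hcard.symm ▸ n.succ_pos : 0 < s.card)
    exact ⟨i, hi, one_mem _⟩
  have hncard : ∀ K : Subgroup G, ((K : Set G) \ {1}).ncard = Nat.card K - 1 := fun K ↦
    Set.ncard_sdiff_singleton_of_mem (one_mem K)
  have hdisj' : (s : Set ι).PairwiseDisjoint fun i ↦ (A i : Set G) \ {1} := fun i hi j hj hij ↦
    Set.disjoint_left.2 fun x hxi hxj ↦
      hxi.2 (Subgroup.disjoint_def.1 (hdisj hi hj hij) hxi.1 hxj.1)
  have hunion : (⋃ i ∈ s, (A i : Set G) \ {1}).ncard = ((H : Set G) \ {1}).ncard :=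
    calc (⋃ i ∈ s, (A i : Set G) \ {1}).ncard = ∑ i ∈ s, ((A i : Set G) \ {1}).ncard := by
          rw [← finsum_mem_coe_finset]
          exact s.finite_toSet.ncard_biUnion (fun _ _ ↦ Set.toFinite _) hdisj'
      _ = (n + 1) * (n - 1) := by
          rw [Finset.sum_congr rfl fun i hi ↦ (hncard _).trans (by rw [hA i hi]),
            Finset.sum_const, hcard, smul_eq_mul]
      _ = ((H : Set G) \ {1}).ncard := by rw [hncard, hH, ← Nat.sq_sub_sq, one_pow]
  have heq : ⋃ i ∈ s, (A i : Set G) \ {1} = (H : Set G) \ {1} :=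
    Set.eq_of_subset_of_ncard_le
      (Set.iUnion₂_subset fun i hi ↦ Set.sdiff_subset_sdiff_left (hle i hi)) hunion.ge
  obtain ⟨i, hi, hgi, -⟩ := Set.mem_iUnion₂.1 (heq.ge ⟨hg, hg1⟩)
  exact ⟨i, hi, hgi⟩

variable (hcard : s.card = n + 1) (hindex : ∀ i ∈ s, (A i).index = n)

include hcard hindex

@[to_additive]
theorem sum_card_subgroup_inf_add_sum_ncard_sdiff [DecidableEq ι] {j : ι} (hj : j ∈ s) :
    ∑ i ∈ s.erase j, Nat.card ↥(A i ⊓ A j) + ∑ i ∈ s.erase j, ((A i : Set G) \ A j).ncard =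
      n * Nat.card (A j) := by
  have hterm : ∀ i ∈ s.erase j,
      Nat.card ↥(A i ⊓ A j) + ((A i : Set G) \ A j).ncard = Nat.card (A j) := fun i hi ↦ by
    rw [subgroup_card_inf_add_ncard_sdiff]
    exact subgroup_card_eq_of_index_eq <|
      (hindex i (Finset.mem_of_mem_erase hi)).trans (hindex j hj).symm
  rw [← Finset.sum_add_distrib, Finset.sum_congr rfl hterm, Finset.sum_const,
    Finset.card_erase_of_mem hj, hcard, Nat.add_sub_cancel, smul_eq_mul]

variable (hcover : ∀ g, ∃ i ∈ s, g ∈ A i)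

include hcover

@[to_additive]
theorem sum_card_subgroup_inf_eq_of_cover [DecidableEq ι] {j : ι} (hj : j ∈ s) :
    ∑ i ∈ s.erase j, Nat.card ↥(A i ⊓ A j) = Nat.card (A j) := by
  apply le_antisymm
  · have hunion := Finset.set_ncard_biUnion_le (s.erase j) fun i ↦ (A i : Set G) \ A j
    have hsum := sum_card_subgroup_inf_add_sum_ncard_sdiff hcard hindex hj
    have hcompl := subgroup_card_add_ncard_compl (A j)
    rw [biUnion_subgroup_sdiff_eq_compl hcover] at hunion
    rw [hindex j hj] at hcompl
    omega
  · have hn : 0 < n := hindex j hj ▸ Nat.pos_of_ne_zero (A j).index_ne_zero_of_finite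
    refine Nat.le_of_mul_le_mul_left ?_ hn
    calc n * Nat.card (A j) = ∑ _ ∈ s.erase j, Nat.card (A j) := by
          rw [Finset.sum_const, Finset.card_erase_of_mem hj, hcard, Nat.add_sub_cancel,
            smul_eq_mul]
      _ ≤ ∑ i ∈ s.erase j, n * Nat.card ↥(A i ⊓ A j) :=
          Finset.sum_le_sum fun i hi ↦
            hindex i (Finset.mem_of_mem_erase hi) ▸ subgroup_card_le_index_mul_card_inf (A i) (A j)
      _ = n * ∑ i ∈ s.erase j, Nat.card ↥(A i ⊓ A j) := (Finset.mul_sum _ _ _).symm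

@[to_additive]
theorem mul_card_subgroup_inf_eq_of_cover {i j : ι} (hi : i ∈ s) (hj : j ∈ s) (hij : i ≠ j) :
    n * Nat.card ↥(A i ⊓ A j) = Nat.card (A j) := by
  classical
  have hle : ∀ l ∈ s.erase j, Nat.card (A j) ≤ n * Nat.card ↥(A l ⊓ A j) := fun l hl ↦
    hindex l (Finset.mem_of_mem_erase hl) ▸ subgroup_card_le_index_mul_card_inf (A l) (A j)
  have hsum : ∑ _ ∈ s.erase j, Nat.card (A j) = ∑ l ∈ s.erase j, n * Nat.card ↥(A l ⊓ A j) := by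
    rw [← Finset.mul_sum, sum_card_subgroup_inf_eq_of_cover hcard hindex hcover hj,
      Finset.sum_const, Finset.card_erase_of_mem hj, hcard, Nat.add_sub_cancel, smul_eq_mul]
  exact ((Finset.sum_eq_sum_iff_of_le hle).1 hsum i (Finset.mem_erase.2 ⟨hij, hi⟩)).symm

@[to_additive]
theorem index_subgroup_inf_eq_sq_of_cover {i j : ι} (hi : i ∈ s) (hj : j ∈ s) (hij : i ≠ j) :
    (A i ⊓ A j).index = n ^ 2 := by
  refine Nat.eq_of_mul_eq_mul_right (Nat.card_pos (α := ↥(A i ⊓ A j))) ?_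
  rw [Subgroup.index_mul_card, sq, mul_assoc,
    mul_card_subgroup_inf_eq_of_cover hcard hindex hcover hi hj hij, ← hindex j hj,
    Subgroup.index_mul_card]

@[to_additive]
theorem pairwiseDisjoint_subgroup_sdiff_of_cover [DecidableEq ι] {j : ι} (hj : j ∈ s) :
    (s.erase j : Set ι).PairwiseDisjoint fun i ↦ (A i : Set G) \ A j := by
  refine pairwiseDisjoint_of_sum_ncard_le_ncard_biUnion ?_
  have hinf := sum_card_subgroup_inf_eq_of_cover hcard hindex hcover hj
  have hsum := sum_card_subgroup_inf_add_sum_ncard_sdiff hcard hindex hj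
  have hcompl := subgroup_card_add_ncard_compl (A j)
  rw [hindex j hj] at hcompl
  rw [biUnion_subgroup_sdiff_eq_compl hcover]
  omega

@[to_additive]
theorem subgroup_inf_le_of_cover {i j l : ι} (hi : i ∈ s) (hj : j ∈ s) (hl : l ∈ s)
    (hij : i ≠ j) : A i ⊓ A j ≤ A l := by
  classical
  rintro g ⟨hgi, hgj⟩
  by_contra hgl
  have hmem : ∀ m ∈ s, g ∈ A m → m ∈ s.erase l := fun m hm hgm ↦
    Finset.mem_erase.2 ⟨fun h ↦ hgl (h ▸ hgm), hm⟩
  exact Set.disjoint_left.1 (pairwiseDisjoint_subgroup_sdiff_of_cover hcard hindex hcover hl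
    (hmem i hi hgi) (hmem j hj hgj) hij) ⟨hgi, hgl⟩ ⟨hgj, hgl⟩

end Subgroup

section Spread

variable {F V : Type*} [Field F] [AddCommGroup V] [Module F V]

theorem index_dualAnnihilator (U : Submodule F V) [FiniteDimensional F U] :
    U.dualAnnihilator.toAddSubgroup.index = Nat.card F ^ finrank F U := by
  rw [AddSubgroup.index_eq_card, ← Subspace.dual_finrank_eq, ← Module.natCard_eq_pow_finrank]
  exact Nat.card_congr (Subspace.quotAnnihilatorEquiv U).toEquiv

variable [FiniteDimensional F V] {N : Finset (Submodule F V)} {k : ℕ}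
  (hblock : ∀ H : Submodule F V, finrank F H + 1 = finrank F V → ∃ U ∈ N, U ≤ H)

include hblock

theorem exists_mem_dualAnnihilator_of_forall_hyperplane (hN : N.Nonempty)
    (f : Dual F V) : ∃ U ∈ N, f ∈ U.dualAnnihilator := by
  obtain rfl | hf := eq_or_ne f 0
  · exact hN.imp fun U hU ↦ ⟨hU, zero_mem _⟩
  · obtain ⟨U, hU, hUf⟩ := hblock _ (Dual.finrank_ker_add_one_of_ne_zero hf)
    exact ⟨U, hU, (Submodule.mem_dualAnnihilator f).2 hUf⟩

variable [Finite F] (hcard : N.card = Nat.card F ^ k + 1) (hdim : ∀ U ∈ N, finrank F U = k)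

include hcard hdim

theorem finrank_sup_eq_two_mul_of_forall_hyperplane {U W : Submodule F V} (hU : U ∈ N)
    (hW : W ∈ N) (hUW : U ≠ W) : finrank F ↥(U ⊔ W) = 2 * k := by
  have : Finite (Dual F V) := Module.finite_of_finite F
  refine (Nat.pow_right_inj (Finite.one_lt_card (α := F))).1 ?_
  calc Nat.card F ^ finrank F ↥(U ⊔ W)
      = (U.dualAnnihilator.toAddSubgroup ⊓ W.dualAnnihilator.toAddSubgroup).index := by
        rw [← index_dualAnnihilator, Submodule.dualAnnihilator_sup_eq]
        rfl
    _ = (Nat.card F ^ k) ^ 2 :=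
        index_addSubgroup_inf_eq_sq_of_cover
          (A := fun X : Submodule F V ↦ X.dualAnnihilator.toAddSubgroup) (i := U) (j := W) hcard
          (fun X hX ↦ by rw [index_dualAnnihilator, hdim X hX])
          (exists_mem_dualAnnihilator_of_forall_hyperplane hblock ⟨U, hU⟩) hU hW hUW
    _ = Nat.card F ^ (2 * k) := by rw [← pow_mul, mul_comm]

theorem disjoint_of_forall_hyperplane {U W : Submodule F V} (hU : U ∈ N) (hW : W ∈ N)
    (hUW : U ≠ W) : Disjoint U W := by
  have hsup := finrank_sup_eq_two_mul_of_forall_hyperplane hblock hcard hdim hU hW hUW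
  have hadd := Submodule.finrank_sup_add_finrank_inf_eq U W
  rw [hdim U hU, hdim W hW] at hadd
  exact disjoint_iff.2 (Submodule.finrank_eq_zero.1 (by omega))

theorem sup_eq_sSup_of_forall_hyperplane {U W : Submodule F V} (hU : U ∈ N) (hW : W ∈ N)
    (hUW : U ≠ W) : U ⊔ W = sSup (N : Set (Submodule F V)) := by
  have : Finite (Dual F V) := Module.finite_of_finite F
  refine le_antisymm (sup_le (le_sSup hU) (le_sSup hW)) (sSup_le fun X hX ↦ ?_)
  rw [← Subspace.dualAnnihilator_le_dualAnnihilator_iff, Submodule.dualAnnihilator_sup_eq]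
  exact addSubgroup_inf_le_of_cover (A := fun X ↦ X.dualAnnihilator.toAddSubgroup) hcard
    (fun X hX ↦ by rw [index_dualAnnihilator, hdim X hX])
    (exists_mem_dualAnnihilator_of_forall_hyperplane hblock ⟨U, hU⟩) hU hW hX hUW

end Spread

theorem exists_mem_of_card_modEq_ncard {α : Type*} {N : Finset α} {p : α → Prop} {q k : ℕ}
    (hq : q ≠ 1) (hk : k ≠ 0) (hcard : N.card = q ^ k + 1)
    (hmod : N.card ≡ Set.ncard {a | a ∈ N ∧ p a} [MOD q]) : ∃ a ∈ N, p a := by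
  by_contra! hnone
  have hempty : {a | a ∈ N ∧ p a} = ∅ :=
    Set.eq_empty_iff_forall_notMem.2 fun a ha ↦ hnone a ha.1 ha.2
  rw [hcard, hempty, Set.ncard_empty, Nat.modEq_zero_iff_dvd,
    Nat.dvd_add_right (dvd_pow_self q hk)] at hmod
  exact hq (Nat.dvd_one.1 hmod)

theorem q_divisible_card_qk_add_one_is_spread_general
    {F V : Type*} [Field F] [Finite F] [AddCommGroup V] [Module F V] [FiniteDimensional F V]
    {N : Finset (Submodule F V)} {k : ℕ}
    (hcard : N.card = Nat.card F ^ k + 1) (hdim : ∀ U ∈ N, finrank F U = k)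
    (hblock : ∀ H : Submodule F V, finrank F H + 1 = finrank F V → ∃ U ∈ N, U ≤ H) :
    finrank F ↥(sSup (N : Set (Submodule F V))) = 2 * k ∧
    ∀ x ∈ sSup (N : Set (Submodule F V)), x ≠ 0 → ∃! U, U ∈ N ∧ x ∈ U := by
  have : Finite V := Module.finite_of_finite F
  obtain ⟨U, hU, W, hW, hUW⟩ : ∃ U ∈ N, ∃ W ∈ N, U ≠ W :=
    Finset.one_lt_card.1 (by rw [hcard]; exact Nat.lt_add_of_pos_left (pow_pos Nat.card_pos k))
  have hfinrank : finrank F ↥(sSup (N : Set (Submodule F V))) = 2 * k := by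
    rw [← sup_eq_sSup_of_forall_hyperplane hblock hcard hdim hU hW hUW]
    exact finrank_sup_eq_two_mul_of_forall_hyperplane hblock hcard hdim hU hW hUW
  have hdisj : ∀ X ∈ N, ∀ Y ∈ N, X ≠ Y → ∀ x ∈ X, x ∈ Y → x = 0 := fun X hX Y hY hne ↦
    Submodule.disjoint_def.1 (disjoint_of_forall_hyperplane hblock hcard hdim hX hY hne)
  refine ⟨hfinrank, fun x hx hx0 ↦ ?_⟩
  obtain ⟨X, hX, hxX⟩ : ∃ X ∈ N, x ∈ X :=
    exists_mem_of_pairwiseDisjoint_addSubgroup (A := Submodule.toAddSubgroup)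
      (H := (sSup (N : Set (Submodule F V))).toAddSubgroup) hcard
      (fun X hX ↦ (natCard_eq_pow_finrank (K := F) (V := X)).trans (by rw [hdim X hX]))
      (fun X hX Y hY hne ↦ AddSubgroup.disjoint_def.2 (hdisj X hX Y hY hne _))
      (fun X hX ↦ Submodule.toAddSubgroup_le _ _ |>.2 (le_sSup hX))
      ((natCard_eq_pow_finrank (K := F) (V := ↥(sSup (N : Set (Submodule F V))))).trans
        (by rw [hfinrank, mul_comm, pow_mul])) hx
  exact ⟨X, ⟨hX, hxX⟩, fun Y ⟨hY, hxY⟩ ↦ by_contra fun hne ↦ hx0 (hdisj Y hY X hX hne x hxY hxX)⟩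

/-- A spanning `q`-divisible set of `k`-subspaces of `F_q^v` of cardinality `q^k + 1`
satisfies `v = 2k` and partitions `F_q^{2k}`, i.e. it is a `k`-spread. -/
theorem q_divisible_card_qk_add_one_is_spread
    {F : Type} [Field F] [Fintype F] (q v k : ℕ)
    (hq : q = Fintype.card F) (hk : 1 ≤ k)
    (N : Finset (Submodule F (Fin v → F))) (hcard : N.card = q ^ k + 1)
    (hdim : ∀ U ∈ N, Module.finrank F ↥U = k)
    (hdisj : ∀ U ∈ N, ∀ W ∈ N, U ≠ W → U ⊓ W = ⊥)
    (hspan : sSup (↑N : Set (Submodule F (Fin v → F))) = ⊤)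
    (hdiv : ∀ H : Submodule F (Fin v → F), Module.finrank F ↥H = v - 1 →
      N.card ≡ Set.ncard {U : Submodule F (Fin v → F) | U ∈ N ∧ U ≤ H} [MOD q]) :
    v = 2 * k ∧
    ∀ x : Fin v → F, x ≠ 0 → ∃! U : Submodule F (Fin v → F), U ∈ N ∧ x ∈ U := by
  obtain rfl : q = Nat.card F := hq.trans Nat.card_eq_fintype_card.symm
  have hblock : ∀ H : Submodule F (Fin v → F), finrank F H + 1 = finrank F (Fin v → F) →
      ∃ U ∈ N, U ≤ H := fun H hH ↦ by
    rw [finrank_fin_fun] at hH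
    exact exists_mem_of_card_modEq_ncard Finite.one_lt_card.ne' (Nat.one_le_iff_ne_zero.1 hk) hcard
      (hdiv H (Nat.eq_sub_of_add_eq hH))
  have h := q_divisible_card_qk_add_one_is_spread_general hcard hdim hblock
  rw [hspan, finrank_top, finrank_fin_fun] at h
  simpa using h
end

section
/- Let N be a q^r-divisible set of n k-dimensional subspaces of F_q^v. Then n does not lie in the half-open real interval [1, (q^{k+r}−1)/(q^k−1)). Moreover, for every integer m with 2 ≤ m ≤ ⌊q^{k+r}/4 + 1/2 + 1/(4q^{k+r})⌋, setting Δ = q^r, u = q^k and ω = (Δu − 2m)² + (2Δu + 1 − 4m²), the cardinality n does not lie in the closed integer interval [⌈(Δum − (Δu+1)/2 − √ω/2)/(u−1)⌉, ⌊(Δum − (Δu+1)/2 + √ω/2)/(u−1)⌋]. -/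
open Real

/-!
Sum over all linear functionals `f` on the ambient space `V`. A subspace of dimension `d` lies in
the kernel of exactly `#V / q ^ d` functionals, so the dimension and disjointness conditions
determine the first two moments of `c f = #{U ∈ N | U ≤ ker f}`. Divisibility makes `Δ` divide
`#N - c f`, whence `(#N - c f - Δ m) (#N - c f - Δ (m - 1)) ≥ 0` for every integer `m`. Bounding the
sum of these products from below by its term at `f = 0`, where `c f = #N`, yields with
`z = #N (q ^ k - 1)` and `D = Δ q ^ k` the inequality
`D² m (m - 1) ≤ #V ((z - D m) (z - D (m - 1)) + z)`. For `m ≥ 2` the left side is positive, so `z`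
avoids the interval between the roots of the quadratic on the right, whose discriminant is `ω`; for
`m = 1` the inequality reads `0 ≤ z (z + 1 - D)`.
-/

section

open Finset Module

section Moments

variable {F V ι : Type*} [Field F] [AddCommGroup V] [Module F V]

open scoped Classical in
lemma sum_card_filter_le_ker_s7 [Fintype (Dual F V)] (s : Finset ι) (A : ι → Submodule F V) :
    ∑ f : Dual F V, #{i ∈ s | A i ≤ LinearMap.ker f} =
      ∑ i ∈ s, Nat.card (A i).dualAnnihilator := by
  refine (sum_card_bipartiteAbove_eq_sum_card_bipartiteBelow
    fun (f : Dual F V) i ↦ A i ≤ LinearMap.ker f).trans (sum_congr rfl fun i _ ↦ ?_)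
  rw [Nat.card_eq_fintype_card, Fintype.card_subtype]
  congr 1 with f
  simp [mem_bipartiteBelow, SetLike.le_def]

variable [FiniteDimensional F V]

lemma pow_finrank_mul_natCard_dualAnnihilator (A : Submodule F V) :
    Nat.card F ^ finrank F A * Nat.card A.dualAnnihilator = Nat.card F ^ finrank F V := by
  rw [natCard_eq_pow_finrank (K := F) (V := A.dualAnnihilator), ← pow_add,
    Subspace.finrank_add_finrank_dualAnnihilator_eq]

lemma pow_finrank_mul_natCard_dualAnnihilator_sup {U W : Submodule F V} (h : Disjoint U W) :
    Nat.card F ^ finrank F U * Nat.card F ^ finrank F W * Nat.card (U ⊔ W).dualAnnihilator =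
      Nat.card F ^ finrank F V := by
  have finrank_sup := Submodule.finrank_sup_add_finrank_inf_eq U W
  rw [h.eq_bot, finrank_bot, add_zero] at finrank_sup
  rw [← pow_add, ← finrank_sup, pow_finrank_mul_natCard_dualAnnihilator]

variable [Fintype (Dual F V)] {k : ℕ} {N : Finset (Submodule F V)}

open scoped Classical in
lemma pow_mul_sum_card_le_ker (hdim : ∀ U ∈ N, finrank F U = k) :
    Nat.card F ^ k * ∑ f : Dual F V, #{U ∈ N | U ≤ LinearMap.ker f} =
      #N * Nat.card F ^ finrank F V := by
  rw [sum_card_filter_le_ker_s7, mul_sum, ← smul_eq_mul (#N)]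
  refine sum_eq_card_nsmul fun U hU ↦ ?_
  rw [← hdim U hU, pow_finrank_mul_natCard_dualAnnihilator]

open scoped Classical in
lemma pow_sq_mul_sum_card_le_ker_sq (hdim : ∀ U ∈ N, finrank F U = k)
    (hdisj : (N : Set (Submodule F V)).PairwiseDisjoint id) :
    (Nat.card F ^ k) ^ 2 * ∑ f : Dual F V, #{U ∈ N | U ≤ LinearMap.ker f} ^ 2 =
      (#N * Nat.card F ^ k + #N.offDiag) * Nat.card F ^ finrank F V := by
  have card_sq (f : Dual F V) : #{U ∈ N | U ≤ LinearMap.ker f} ^ 2 =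
      #{p ∈ N ×ˢ N | p.1 ⊔ p.2 ≤ LinearMap.ker f} := by
    rw [sq, ← card_product]
    congr 1 with p
    simp [and_and_and_comm]
  have diag_term (U) (hU : U ∈ N) : (Nat.card F ^ k) ^ 2 * Nat.card (U ⊔ U).dualAnnihilator =
      Nat.card F ^ k * Nat.card F ^ finrank F V := by
    rw [sup_idem, ← pow_finrank_mul_natCard_dualAnnihilator U, hdim U hU]
    ring
  have offDiag_term (p) (hp : p ∈ N.offDiag) :
      (Nat.card F ^ k) ^ 2 * Nat.card (p.1 ⊔ p.2).dualAnnihilator =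
        Nat.card F ^ finrank F V := by
    obtain ⟨hU, hW, hne⟩ := mem_offDiag.mp hp
    have disjoint : Disjoint p.1 p.2 := hdisj hU hW hne
    rw [← pow_finrank_mul_natCard_dualAnnihilator_sup disjoint, hdim _ hU, hdim _ hW, sq]
  rw [sum_congr rfl fun f _ ↦ card_sq f, sum_card_filter_le_ker_s7, mul_sum, ← diag_union_offDiag,
    sum_union (disjoint_diag_offDiag N), sum_diag, sum_congr rfl diag_term,
    sum_congr rfl offDiag_term]
  simp only [sum_const, smul_eq_mul]
  ring

end Moments

open scoped Classical in
/-- The `Δ`-divisible sets of `k`-dimensional subspaces, of which the `q ^ r`-divisible ones are the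
case `Δ = q ^ r`. A hyperplane is encoded by `finrank F H + 1 = finrank F V`, which avoids truncated
subtraction: the zero space has no hyperplanes. -/
structure IsDivisibleSet {F V : Type*} [Field F] [AddCommGroup V] [Module F V] (Δ k : ℕ)
    (N : Finset (Submodule F V)) : Prop where
  finrank_eq : ∀ U ∈ N, finrank F U = k
  pairwiseDisjoint : (N : Set (Submodule F V)).PairwiseDisjoint id
  modEq : ∀ H : Submodule F V, finrank F H + 1 = finrank F V →
    #N ≡ #{U ∈ N | U ≤ H} [MOD Δ]

lemma sub_mul_mul_sub_mul_pred_nonneg_of_dvd {d x : ℤ} (h : d ∣ x) (m : ℤ) :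
    0 ≤ (x - d * m) * (x - d * (m - 1)) := by
  obtain ⟨j, rfl⟩ := h
  have consecutive : 0 ≤ (j - m) * (j - m + 1) := by
    rcases lt_or_ge (j - m) 0 with hlt | hge
    · exact mul_nonneg_of_nonpos_of_nonpos hlt.le hlt
    · positivity
  calc 0 ≤ d ^ 2 * ((j - m) * (j - m + 1)) := mul_nonneg (sq_nonneg d) consecutive
    _ = _ := by ring

namespace IsDivisibleSet

variable {F V : Type*} [Field F] [AddCommGroup V] [Module F V] {Δ k : ℕ}
  {N : Finset (Submodule F V)}

lemma of_modEq_ncard (hdim : ∀ U ∈ N, finrank F U = k)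
    (hdisj : ∀ U ∈ N, ∀ W ∈ N, U ≠ W → U ⊓ W = ⊥)
    (hdiv : ∀ H : Submodule F V, finrank F H = finrank F V - 1 →
      #N ≡ {U : Submodule F V | U ∈ N ∧ U ≤ H}.ncard [MOD Δ]) :
    IsDivisibleSet Δ k N where
  finrank_eq := hdim
  pairwiseDisjoint := fun U hU W hW hne ↦ disjoint_iff.mpr (hdisj U hU W hW hne)
  modEq := fun H hH ↦ by
    simpa [← Set.ncard_coe_finset] using hdiv H (Nat.eq_sub_of_add_eq hH)

variable [FiniteDimensional F V]

open scoped Classical in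
lemma dvd_card_sub_card_le_ker (hN : IsDivisibleSet Δ k N) (f : Dual F V) :
    (Δ : ℤ) ∣ #N - #{U ∈ N | U ≤ LinearMap.ker f} := by
  rcases eq_or_ne f 0 with rfl | hf
  · simp
  · exact (hN.modEq _ (Dual.finrank_ker_add_one_of_ne_zero hf)).symm.dvd

open scoped Classical in
lemma sq_mul_le_sum_sub_mul_sub [Fintype (Dual F V)] (hN : IsDivisibleSet Δ k N) (m : ℤ) :
    (Δ : ℤ) ^ 2 * (m * (m - 1)) ≤
      ∑ f : Dual F V, ((#N - #{U ∈ N | U ≤ LinearMap.ker f} : ℤ) - Δ * m) *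
        ((#N - #{U ∈ N | U ≤ LinearMap.ker f} : ℤ) - Δ * (m - 1)) := by
  refine le_trans (le_of_eq ?_) (single_le_sum (fun f _ ↦
    sub_mul_mul_sub_mul_pred_nonneg_of_dvd (hN.dvd_card_sub_card_le_ker f) m) (mem_univ 0))
  simp only [LinearMap.ker_zero, le_top, filter_true]
  ring

variable [Finite F]

lemma sq_mul_le_card_mul_quadratic (hN : IsDivisibleSet Δ k N) (m : ℤ) :
    (Δ * Nat.card F ^ k : ℤ) ^ 2 * (m * (m - 1)) ≤
      Nat.card F ^ finrank F V *
        ((#N * (Nat.card F ^ k - 1) - Δ * Nat.card F ^ k * m) *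
          (#N * (Nat.card F ^ k - 1) - Δ * Nat.card F ^ k * (m - 1)) +
        #N * (Nat.card F ^ k - 1)) := by
  classical
  have : Finite (Dual F V) := Module.finite_of_finite F
  have := Fintype.ofFinite (Dual F V)
  set c : Dual F V → ℤ := fun f ↦ #{U ∈ N | U ≤ LinearMap.ker f}
  set u : ℤ := Nat.card F ^ k
  have moment_zero : (Fintype.card (Dual F V) : ℤ) = Nat.card F ^ finrank F V := by
    rw [← Nat.card_eq_fintype_card, natCard_eq_pow_finrank (K := F),
      Subspace.dual_finrank_eq, Nat.cast_pow]
  have moment_one : u * ∑ f, c f = #N * Nat.card F ^ finrank F V := by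
    simp only [c, u]
    exact_mod_cast pow_mul_sum_card_le_ker hN.finrank_eq
  have card_offDiag : (#N.offDiag : ℤ) = #N * #N - #N := by
    rw [offDiag_card, Nat.cast_sub (Nat.le_mul_self _), Nat.cast_mul]
  have moment_two :
      u ^ 2 * ∑ f, c f ^ 2 = (#N * u + (#N * #N - #N)) * Nat.card F ^ finrank F V := by
    rw [← card_offDiag]
    simp only [c, u]
    exact_mod_cast pow_sq_mul_sum_card_le_ker_sq hN.finrank_eq hN.pairwiseDisjoint
  have sum_expand : ∑ f, (#N - c f - Δ * m) * (#N - c f - Δ * (m - 1)) =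
      Fintype.card (Dual F V) * ((#N - Δ * m) * (#N - Δ * (m - 1))) -
        (2 * #N - Δ * (2 * m - 1)) * ∑ f, c f + ∑ f, c f ^ 2 := by
    rw [← nsmul_eq_mul (Fintype.card _), ← card_univ, ← sum_const, mul_sum, ← sum_sub_distrib,
      ← sum_add_distrib]
    exact sum_congr rfl fun f _ ↦ by ring
  have scaled := mul_le_mul_of_nonneg_left (hN.sq_mul_le_sum_sub_mul_sub m) (sq_nonneg u)
  rw [sum_expand, moment_zero] at scaled
  linear_combination scaled + moment_two - u * (2 * #N - Δ * (2 * m - 1)) * moment_one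

end IsDivisibleSet

/-- The quantity `ω` of the excluded intervals as a function of `D = Δ u` and `m`. It is the
discriminant of `(z - D m) (z - D (m - 1)) + z` as a polynomial in `z`. -/
noncomputable def intervalDiscrim (D m : ℝ) : ℝ :=
  (D - 2 * m) ^ 2 + (2 * D + 1 - 4 * m ^ 2)

lemma intervalDiscrim_nonneg {D m : ℝ} (hD : 0 < D) (hm : m ≤ D / 4 + 1 / 2 + 1 / (4 * D)) :
    0 ≤ intervalDiscrim D m := by
  have h : intervalDiscrim D m = 4 * D * (D / 4 + 1 / 2 + 1 / (4 * D) - m) := by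
    unfold intervalDiscrim
    field_simp
    ring
  rw [h]
  exact mul_nonneg (by positivity) (sub_nonneg.mpr hm)

lemma quadratic_nonpos_of_mem_Icc {D m z : ℝ} (hω : 0 ≤ intervalDiscrim D m)
    (hz : z ∈ Set.Icc (D * m - (D + 1) / 2 - √(intervalDiscrim D m) / 2)
      (D * m - (D + 1) / 2 + √(intervalDiscrim D m) / 2)) :
    (z - D * m) * (z - D * (m - 1)) + z ≤ 0 := by
  set s := √(intervalDiscrim D m)
  have hs : s ^ 2 = (D - 2 * m) ^ 2 + (2 * D + 1 - 4 * m ^ 2) := sq_sqrt hω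
  calc (z - D * m) * (z - D * (m - 1)) + z
      = (z - (D * m - (D + 1) / 2 - s / 2)) * (z - (D * m - (D + 1) / 2 + s / 2)) := by
        linear_combination hs / 4
    _ ≤ 0 := mul_nonpos_of_nonneg_of_nonpos (sub_nonneg.mpr hz.1) (sub_nonpos.mpr hz.2)

lemma natCard_pow_sub_one_pos (F : Type*) [Finite F] [Nontrivial F] {k : ℕ} (hk : k ≠ 0) :
    (0 : ℝ) < Nat.card F ^ k - 1 :=
  sub_pos.mpr (one_lt_pow₀ (mod_cast Finite.one_lt_card) hk)

namespace IsDivisibleSet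

variable {F V : Type*} [Field F] [Finite F] [AddCommGroup V] [Module F V] [FiniteDimensional F V]
  {Δ k : ℕ} {N : Finset (Submodule F V)}

lemma card_notMem_Ico (hN : IsDivisibleSet Δ k N) (hk : k ≠ 0) :
    (#N : ℝ) ∉ Set.Ico 1 ((Δ * Nat.card F ^ k - 1) / (Nat.card F ^ k - 1) : ℝ) := by
  rintro ⟨one_le, lt_div⟩
  have hq : (0 : ℝ) < Nat.card F := mod_cast Nat.card_pos
  have hu := natCard_pow_sub_one_pos F hk
  rw [lt_div_iff₀ hu] at lt_div
  have hV : (0 : ℝ) < Nat.card F ^ finrank F V := by positivity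
  have key : (0 : ℝ) ≤ Nat.card F ^ finrank F V * (#N * (Nat.card F ^ k - 1) *
      (#N * (Nat.card F ^ k - 1) + 1 - Δ * Nat.card F ^ k)) := by
    have := (Int.cast_le (R := ℝ)).mpr (hN.sq_mul_le_card_mul_quadratic 1)
    push_cast at this
    linear_combination this
  exact key.not_gt (mul_neg_of_pos_of_neg hV (mul_neg_of_pos_of_neg (by positivity) (by linarith)))

lemma quadratic_pos (hN : IsDivisibleSet Δ k N) (hΔ : 0 < Δ) {m : ℤ} (hm : 2 ≤ m) :
    (0 : ℝ) < (#N * (Nat.card F ^ k - 1) - Δ * Nat.card F ^ k * m) *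
        (#N * (Nat.card F ^ k - 1) - Δ * Nat.card F ^ k * (m - 1)) +
      #N * (Nat.card F ^ k - 1) := by
  have hq : (0 : ℤ) < Nat.card F := mod_cast Nat.card_pos
  have hm' : 0 < m - 1 := by lia
  have lhs_pos : 0 < (Δ * Nat.card F ^ k : ℤ) ^ 2 * (m * (m - 1)) := by positivity
  exact_mod_cast pos_of_mul_pos_right
    (lhs_pos.trans_le (hN.sq_mul_le_card_mul_quadratic m)) (by positivity)

lemma card_notMem_Icc (hN : IsDivisibleSet Δ k N) (hk : k ≠ 0) (hΔ : 0 < Δ) {m : ℤ} (hm : 2 ≤ m)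
    (hm_le : m ≤ ⌊(Δ * Nat.card F ^ k / 4 + 1 / 2 + 1 / (4 * (Δ * Nat.card F ^ k)) : ℝ)⌋) :
    (#N : ℤ) ∉ Set.Icc
      ⌈(Δ * Nat.card F ^ k * m - (Δ * Nat.card F ^ k + 1) / 2 -
        √(intervalDiscrim (Δ * Nat.card F ^ k) m) / 2) / (Nat.card F ^ k - 1 : ℝ)⌉
      ⌊(Δ * Nat.card F ^ k * m - (Δ * Nat.card F ^ k + 1) / 2 +
        √(intervalDiscrim (Δ * Nat.card F ^ k) m) / 2) / (Nat.card F ^ k - 1 : ℝ)⌋ := by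
  rintro ⟨lower, upper⟩
  have hq : (0 : ℝ) < Nat.card F := mod_cast Nat.card_pos
  have hu := natCard_pow_sub_one_pos F hk
  have hω := intervalDiscrim_nonneg (by positivity) (Int.le_floor.mp hm_le)
  rw [Int.ceil_le, Int.cast_natCast, div_le_iff₀ hu] at lower
  rw [Int.le_floor, Int.cast_natCast, le_div_iff₀ hu] at upper
  exact (quadratic_nonpos_of_mem_Icc hω ⟨lower, upper⟩).not_gt (hN.quadratic_pos hΔ hm)

end IsDivisibleSet

theorem divisible_set_excluded_cardinalities_general {F V : Type*} [Field F] [Finite F]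
    [AddCommGroup V] [Module F V] [FiniteDimensional F V] {Δ k : ℕ} {N : Finset (Submodule F V)}
    (hN : IsDivisibleSet Δ k N) (hk : k ≠ 0) (hΔ : 0 < Δ) :
    (#N : ℝ) ∉ Set.Ico 1 ((Δ * Nat.card F ^ k - 1) / (Nat.card F ^ k - 1) : ℝ) ∧
    ∀ m : ℤ, 2 ≤ m →
      m ≤ ⌊(Δ * Nat.card F ^ k / 4 + 1 / 2 + 1 / (4 * (Δ * Nat.card F ^ k)) : ℝ)⌋ →
      (#N : ℤ) ∉ Set.Icc
        ⌈(Δ * Nat.card F ^ k * m - (Δ * Nat.card F ^ k + 1) / 2 -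
          √(intervalDiscrim (Δ * Nat.card F ^ k) m) / 2) / (Nat.card F ^ k - 1 : ℝ)⌉
        ⌊(Δ * Nat.card F ^ k * m - (Δ * Nat.card F ^ k + 1) / 2 +
          √(intervalDiscrim (Δ * Nat.card F ^ k) m) / 2) / (Nat.card F ^ k - 1 : ℝ)⌋ :=
  ⟨hN.card_notMem_Ico hk, fun _ hm hm_le ↦ hN.card_notMem_Icc hk hΔ hm hm_le⟩

end

/-- Excluded intervals of cardinalities for `q^r`-divisible sets of `k`-subspaces:
`n ∉ [1, (q^{k+r}-1)/(q^k-1))` and, for every integer `m` with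
`2 ≤ m ≤ ⌊q^{k+r}/4 + 1/2 + 1/(4q^{k+r})⌋`, setting `Δ = q^r`, `u = q^k` and
`ω = (Δu - 2m)² + (2Δu + 1 - 4m²)`, the cardinality `n` does not lie in
`[⌈(Δum - (Δu+1)/2 - √ω/2)/(u-1)⌉, ⌊(Δum - (Δu+1)/2 + √ω/2)/(u-1)⌋]`. -/
theorem divisible_set_excluded_cardinalities
    {F : Type} [Field F] [Fintype F] (q v k r n : ℕ)
    (hq : q = Fintype.card F) (hk : 1 ≤ k) (hr : 1 ≤ r)
    (N : Finset (Submodule F (Fin v → F))) (hn : N.card = n)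
    (hdim : ∀ U ∈ N, Module.finrank F ↥U = k)
    (hdisj : ∀ U ∈ N, ∀ W ∈ N, U ≠ W → U ⊓ W = ⊥)
    (hdiv : ∀ H : Submodule F (Fin v → F), Module.finrank F ↥H = v - 1 →
      n ≡ Set.ncard {U : Submodule F (Fin v → F) | U ∈ N ∧ U ≤ H} [MOD q ^ r]) :
    (¬ ((1 : ℝ) ≤ (n : ℝ) ∧
        (n : ℝ) < ((q : ℝ) ^ (k + r) - 1) / ((q : ℝ) ^ k - 1))) ∧
    (∀ m : ℤ, 2 ≤ m →
      m ≤ ⌊(q : ℝ) ^ (k + r) / 4 + 1 / 2 + 1 / (4 * (q : ℝ) ^ (k + r))⌋ →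
      ¬ (⌈((q : ℝ) ^ r * (q : ℝ) ^ k * (m : ℝ)
              - ((q : ℝ) ^ r * (q : ℝ) ^ k + 1) / 2
              - Real.sqrt (((q : ℝ) ^ r * (q : ℝ) ^ k - 2 * (m : ℝ)) ^ 2
                  + (2 * ((q : ℝ) ^ r * (q : ℝ) ^ k) + 1 - 4 * (m : ℝ) ^ 2)) / 2)
            / ((q : ℝ) ^ k - 1)⌉ ≤ (n : ℤ) ∧
         (n : ℤ) ≤ ⌊((q : ℝ) ^ r * (q : ℝ) ^ k * (m : ℝ)
              - ((q : ℝ) ^ r * (q : ℝ) ^ k + 1) / 2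
              + Real.sqrt (((q : ℝ) ^ r * (q : ℝ) ^ k - 2 * (m : ℝ)) ^ 2
                  + (2 * ((q : ℝ) ^ r * (q : ℝ) ^ k) + 1 - 4 * (m : ℝ) ^ 2)) / 2)
            / ((q : ℝ) ^ k - 1)⌋)) := by
  subst hq hn
  simpa [intervalDiscrim, add_comm k r, pow_add] using
    divisible_set_excluded_cardinalities_general (.of_modEq_ncard hdim hdisj (by simpa using hdiv))
      (by lia) (pow_pos Fintype.card_pos r)
end

section
/- Let N be a nonempty q^r-divisible set of n k-dimensional subspaces of F_q^v, where r = a·k + b with integers a ≥ 1 and 0 < b < k. Then n ≥ (q^{(a+2)k}−1)/(q^k−1). -/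
/-!
Put `Q = q ^ k`, `Δ = q ^ (a * k + 1)` and `A = 1 + Q + ⋯ + Q ^ a`, let `u` be the remainder of `n`
modulo `Δ`, and let `e = n - Q * u` be the excess of `n`. Every linear functional `f` has
`x f ≡ u (mod Δ)` members of `N` in its kernel. Double counting gives the first two factorial
moments of `x`, so averaging `u ≤ x f` yields `1 ≤ e`, and averaging
`0 ≤ (x f - u) * (x f - u - Δ)` yields `e * (Q * Δ - e) ≤ n * (Q - 1)`.

The bound to be proved is `Q * A + 1`, so suppose `n ≤ Q * A`. By concavity the quadratic inequality
forces `e < Q`. On the other hand `u < A`, and as `A` is minus the inverse of `Q - 1` modulo `Δ`,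
the congruence `(Q - 1) * u ≡ -e (mod Δ)` reads `u ≡ e * A (mod Δ)`; comparing sizes gives
`n ≤ e * A`. Inserting this into the quadratic inequality gives `Q < e`, a contradiction.
-/

open Finset Module

section Arithmetic

theorem mul_sub_self_nonneg_of_dvd {d y : ℤ} (h : d ∣ y) : 0 ≤ y * (y - d) := by
  obtain ⟨t, rfl⟩ := h
  have ht : 0 ≤ t * (t - 1) := by
    rcases le_or_gt t 0 with h | h
    · exact mul_nonneg_of_nonpos_of_nonpos h (by lia)
    · exact mul_nonneg h.le (by lia)
  calc 0 ≤ d ^ 2 * (t * (t - 1)) := by positivity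
    _ = d * t * (d * t - d) := by ring

theorem geom_sum_succ_lt_mul_pow {Q s : ℕ} (hQ : 2 ≤ Q) (hs : 2 ≤ s) (a : ℕ) :
    ∑ i ∈ range (a + 1), Q ^ i < s * Q ^ a := by
  have hlt : ∑ i ∈ range a, Q ^ i < Q ^ a := Nat.geomSum_lt hQ fun _ => mem_range.mp
  have hle : 2 * Q ^ a ≤ s * Q ^ a := Nat.mul_le_mul_right _ hs
  rw [sum_range_succ]
  lia

variable {Q Δ A n u e : ℤ}

theorem excess_lt (hQ : 0 < Q) (hAΔ : A < Δ) (hen : e ≤ n) (hn : n ≤ Q * A)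
    (hquad : e * (Q * Δ - e) ≤ n * (Q - 1)) : e < Q := by
  by_contra! hQe
  have hconcave : Q * (Q * Δ - Q) ≤ e * (Q * Δ - e) := by
    have hright : e ≤ Q * Δ - Q := by nlinarith
    linarith [mul_nonneg (sub_nonneg.mpr hQe) (sub_nonneg.mpr hright)]
  have hupper : n * (Q - 1) < Q * (Q * A) := by nlinarith
  have hlower : Q * (Q * A) ≤ Q * (Q * Δ - Q) := by gcongr; nlinarith
  linarith

theorem card_le_excess_mul {s P : ℤ} (hs : 0 < s) (hP : 0 < P) (hQ : 0 < Q) (hsQ : s ∣ Q)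
    (hΔ : Δ = s * P) (hA : (Q - 1) * A = Q * P - 1) (hPA : P ≤ A) (huA : u < A) (he : 1 ≤ e)
    (hne : n = e + Q * u) (hun : u ≡ n [ZMOD Δ]) : n ≤ e * A := by
  obtain ⟨T, hQT⟩ := hsQ
  obtain ⟨l, hl⟩ := hun.dvd
  have hT : 0 < T := pos_of_mul_pos_right (hQT ▸ hQ) hs.le
  have hu : (Q - 1) * u = l * Δ - e := by linarith
  -- `hjΔ` is the congruence `u ≡ e * A (mod Δ)` with its quotient made explicit.
  set j := l * A - T * u with hj
  have hjΔ : j * Δ = e * A - u := by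
    linear_combination hj * Δ - A * hu + u * hA - T * u * hΔ + P * u * hQT
  have hjQ : (Q - 1) * j = e * T - l := by
    linear_combination (Q - 1) * hj - T * hu + l * hA + l * P * hQT - l * T * hΔ
  have hej : e ≤ s * j := by
    have hlt : (e - 1) * P < s * j * P :=
      calc (e - 1) * P ≤ (e - 1) * A := by gcongr
        _ < j * Δ := by linarith
        _ = s * j * P := by rw [hΔ]; ring
    linarith [lt_of_mul_lt_mul_right hlt hP.le]
  have hlj : l ≤ j := by
    have hle : e * T ≤ s * j * T := by gcongr
    have heq : s * j * T = Q * j := by rw [hQT]; ring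
    linarith
  calc n = u + l * Δ := by linarith
    _ ≤ u + j * Δ := by gcongr; rw [hΔ]; positivity
    _ = e * A := by linarith

theorem mul_lt_card_of_excess {s P : ℤ} (hs : 0 < s) (hP : 0 < P) (hQ : 0 < Q) (hsQ : s ∣ Q)
    (hΔ : Δ = s * P) (hA : (Q - 1) * A = Q * P - 1) (hPA : P ≤ A) (hAΔ : A < Δ) (hu : 0 ≤ u)
    (he : 1 ≤ e) (hne : n = e + Q * u) (hun : u ≡ n [ZMOD Δ])
    (hquad : e * (Q * Δ - e) ≤ n * (Q - 1)) : Q * A < n := by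
  by_contra! hn
  have heQ : e < Q :=
    excess_lt hQ hAΔ (by linarith [mul_nonneg hQ.le hu]) hn hquad
  have huA : u < A := lt_of_mul_lt_mul_left (by linarith) hQ.le
  have hneA : n ≤ e * A := card_le_excess_mul hs hP hQ hsQ hΔ hA hPA huA he hne hun
  have hcancel : Q * Δ - e ≤ A * (Q - 1) := by
    refine le_of_mul_le_mul_left (hquad.trans ?_) (by lia : 0 < e)
    rw [← mul_assoc]
    gcongr
    lia
  have hle : Q * (A + 1) ≤ Q * Δ := by gcongr; lia
  linarith

end Arithmetic

variable {F V : Type*} [Field F] [AddCommGroup V] [Module F V]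

open Classical in
/-- The members of the family `N` that lie in the subspace `H`. -/
noncomputable def membersIn (N : Finset (Submodule F V)) (H : Submodule F V) :
    Finset (Submodule F V) :=
  {U ∈ N | U ≤ H}

/-- A `d`-divisible family of subspaces: the number of members in a hyperplane does not depend on
the hyperplane modulo `d`, and is congruent to the total. Disjointness of the members is kept
separate, in `IsPartialSpread`. -/
def IsDivisible (d : ℕ) (N : Finset (Submodule F V)) : Prop :=
  ∀ H : Submodule F V, finrank F H + 1 = finrank F V → #N ≡ #(membersIn N H) [MOD d]

/-- A partial `k`-spread: a family of `k`-dimensional subspaces with pairwise trivial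
intersection. -/
structure IsPartialSpread (k : ℕ) (N : Finset (Submodule F V)) : Prop where
  finrank_eq : ∀ U ∈ N, finrank F U = k
  disjoint : ∀ U ∈ N, ∀ W ∈ N, U ≠ W → Disjoint U W

section DoubleCounting

variable {N : Finset (Submodule F V)} {k d : ℕ}

theorem coe_membersIn (H : Submodule F V) : (membersIn N H : Set _) = {U | U ∈ N ∧ U ≤ H} := by
  simp [membersIn]

theorem membersIn_ker_zero : membersIn N (LinearMap.ker (0 : Dual F V)) = N := by
  simp [membersIn]

open Classical in
theorem offDiag_membersIn (H : Submodule F V) :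
    (membersIn N H).offDiag = {p ∈ N.offDiag | p.1 ⊔ p.2 ≤ H} := by
  ext p
  simp only [membersIn, mem_offDiag, mem_filter, sup_le_iff]
  tauto

theorem IsDivisible.of_dvd {d' : ℕ} (h : IsDivisible d N) (hd : d' ∣ d) : IsDivisible d' N :=
  fun H hH => (h H hH).of_dvd hd

variable [FiniteDimensional F V]

theorem IsDivisible.modEq_card_membersIn_ker (h : IsDivisible d N) (f : Dual F V) :
    #N ≡ #(membersIn N (LinearMap.ker f)) [MOD d] := by
  rcases eq_or_ne f 0 with rfl | hf
  · rw [membersIn_ker_zero]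
  · exact h _ (Dual.finrank_ker_add_one_of_ne_zero hf)

theorem IsPartialSpread.finrank_sup (h : IsPartialSpread k N) {U W : Submodule F V} (hU : U ∈ N)
    (hW : W ∈ N) (hUW : U ≠ W) : finrank F ↥(U ⊔ W) = k + k := by
  have hsum := Submodule.finrank_sup_add_finrank_inf_eq U W
  rwa [(h.disjoint U hU W hW hUW).eq_bot, finrank_bot, add_zero, h.finrank_eq U hU,
    h.finrank_eq W hW] at hsum

theorem pow_finrank_mul_card_dualAnnihilator (U : Submodule F V) :
    Nat.card F ^ finrank F U * Nat.card U.dualAnnihilator = Nat.card (Dual F V) := by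
  rw [natCard_eq_pow_finrank (K := F) (V := U.dualAnnihilator), ← pow_add,
    Subspace.finrank_add_finrank_dualAnnihilator_eq,
    natCard_eq_pow_finrank (K := F) (V := Dual F V), Subspace.dual_finrank_eq]

section Moments

variable [Fintype (Dual F V)]

open Classical in
theorem pow_mul_sum_card_filter_le_ker {ι : Type*} (s : Finset ι) {W : ι → Submodule F V} {m : ℕ}
    (hW : ∀ i ∈ s, finrank F (W i) = m) :
    Nat.card F ^ m * ∑ f : Dual F V, #{i ∈ s | W i ≤ LinearMap.ker f} =
      #s * Nat.card (Dual F V) := by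
  have hswap : ∑ f : Dual F V, #{i ∈ s | W i ≤ LinearMap.ker f} =
      ∑ i ∈ s, #{f : Dual F V | W i ≤ LinearMap.ker f} :=
    (sum_card_bipartiteAbove_eq_sum_card_bipartiteBelow _).symm
  have hann (i : ι) :
      #{f : Dual F V | W i ≤ LinearMap.ker f} = Nat.card (W i).dualAnnihilator := by
    rw [← Fintype.card_subtype, ← Nat.card_eq_fintype_card]
    exact Nat.card_congr
      (Equiv.subtypeEquivRight fun f => (Submodule.mem_dualAnnihilator f).symm)
  rw [hswap, mul_sum, ← smul_eq_mul (a := #s), ← sum_const]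
  refine sum_congr rfl fun i hi => ?_
  rw [hann, ← hW i hi, pow_finrank_mul_card_dualAnnihilator]

theorem pow_mul_sum_card_membersIn_ker (hdim : ∀ U ∈ N, finrank F U = k) :
    Nat.card F ^ k * ∑ f : Dual F V, #(membersIn N (LinearMap.ker f)) =
      #N * Nat.card (Dual F V) :=
  pow_mul_sum_card_filter_le_ker N hdim

theorem IsPartialSpread.pow_mul_sum_card_offDiag (h : IsPartialSpread k N) :
    (Nat.card F ^ k) ^ 2 * ∑ f : Dual F V, #(membersIn N (LinearMap.ker f)).offDiag =
      #N.offDiag * Nat.card (Dual F V) := by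
  simp only [offDiag_membersIn, ← pow_mul, mul_two]
  refine pow_mul_sum_card_filter_le_ker N.offDiag fun p hp => ?_
  obtain ⟨hU, hW, hUW⟩ := mem_offDiag.mp hp
  exact h.finrank_sup hU hW hUW

theorem IsPartialSpread.sq_mul_sum_mul_sub (h : IsPartialSpread k N) {Q : ℤ}
    (hQ : Q = Nat.card F ^ k) (u Δ : ℤ) :
    Q ^ 2 * ∑ f : Dual F V, ((#(membersIn N (LinearMap.ker f)) : ℤ) - u) *
        (#(membersIn N (LinearMap.ker f)) - u - Δ) =
      (#N * (Q - 1) - (#N - Q * u) * (Q * Δ - (#N - Q * u))) * Nat.card (Dual F V) := by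
  have hoffDiag (s : Finset (Submodule F V)) : (#s.offDiag : ℤ) = #s * (#s - 1) := by
    rw [offDiag_card, Nat.cast_sub (Nat.le_mul_self _)]
    push_cast
    ring
  have hfirst : Q * ∑ f : Dual F V, (#(membersIn N (LinearMap.ker f)) : ℤ) =
      #N * Nat.card (Dual F V) := by
    rw [hQ]
    exact_mod_cast pow_mul_sum_card_membersIn_ker h.finrank_eq
  have hsecond : Q ^ 2 * ∑ f : Dual F V, (#(membersIn N (LinearMap.ker f)).offDiag : ℤ) =
      #N.offDiag * Nat.card (Dual F V) := by
    rw [hQ]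
    exact_mod_cast h.pow_mul_sum_card_offDiag
  have hexpand : ∑ f : Dual F V, ((#(membersIn N (LinearMap.ker f)) : ℤ) - u) *
        (#(membersIn N (LinearMap.ker f)) - u - Δ) =
      ∑ f : Dual F V, (#(membersIn N (LinearMap.ker f)).offDiag : ℤ) +
        (1 - 2 * u - Δ) * ∑ f : Dual F V, (#(membersIn N (LinearMap.ker f)) : ℤ) +
        Nat.card (Dual F V) * (u * (u + Δ)) := by
    rw [Nat.card_eq_fintype_card, ← card_univ, ← nsmul_eq_mul, ← sum_const, mul_sum,
      ← sum_add_distrib, ← sum_add_distrib]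
    refine sum_congr rfl fun f _ => ?_
    rw [hoffDiag]
    ring
  rw [hexpand]
  rw [hoffDiag] at hsecond
  linear_combination hsecond + Q * (1 - 2 * u - Δ) * hfirst

end Moments

variable [Finite F]

theorem pow_mul_lt_card (hk : k ≠ 0) (hdim : ∀ U ∈ N, finrank F U = k) (hN : N.Nonempty)
    {u : ℕ} (hu : ∀ f : Dual F V, u ≤ #(membersIn N (LinearMap.ker f))) :
    Nat.card F ^ k * u < #N := by
  have : Finite (Dual F V) := Module.finite_of_finite F
  let _ : Fintype (Dual F V) := Fintype.ofFinite _
  have hQ : 1 < Nat.card F ^ k := Nat.one_lt_pow hk Finite.one_lt_card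
  have hmoment := pow_mul_sum_card_membersIn_ker hdim
  have hsum : ∑ _f : Dual F V, u = u * Nat.card (Dual F V) := by simp [mul_comm]
  have hle : Nat.card F ^ k * u ≤ #N := by
    refine Nat.le_of_mul_le_mul_right (c := Nat.card (Dual F V)) ?_ Nat.card_pos
    rw [← hmoment, mul_assoc, ← hsum]
    gcongr with f
    exact hu f
  have hun : u < #N := by nlinarith [hN.card_pos]
  have hlt : ∑ _f : Dual F V, u < ∑ f : Dual F V, #(membersIn N (LinearMap.ker f)) :=
    sum_lt_sum (fun f _ => hu f) ⟨0, mem_univ _, by rwa [membersIn_ker_zero]⟩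
  refine Nat.lt_of_mul_lt_mul_right (a := Nat.card (Dual F V)) ?_
  rw [← hmoment, mul_assoc, ← hsum]
  gcongr

theorem IsPartialSpread.excess_mul_le (h : IsPartialSpread k N) (hdiv : IsDivisible d N) {Q u : ℤ}
    (hQ : Q = Nat.card F ^ k) (hu : u ≡ #N [ZMOD d]) :
    (#N - Q * u) * (Q * d - (#N - Q * u)) ≤ #N * (Q - 1) := by
  have : Finite (Dual F V) := Module.finite_of_finite F
  let _ : Fintype (Dual F V) := Fintype.ofFinite _
  have hterm (f : Dual F V) : 0 ≤ ((#(membersIn N (LinearMap.ker f)) : ℤ) - u) *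
      (#(membersIn N (LinearMap.ker f)) - u - d) :=
    mul_sub_self_nonneg_of_dvd
      (hu.trans (Int.natCast_modEq_iff.mpr (hdiv.modEq_card_membersIn_ker f))).dvd
  have hsum := mul_nonneg (sq_nonneg Q) (sum_nonneg fun f (_ : f ∈ univ) => hterm f)
  rw [h.sq_mul_sum_mul_sub hQ] at hsum
  have hcard : (0 : ℤ) < Nat.card (Dual F V) := mod_cast Nat.card_pos
  linarith [nonneg_of_mul_nonneg_left hsum hcard]

end DoubleCounting

theorem divisible_set_lower_bound_non_divisible_case_general [Finite F] [FiniteDimensional F V]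
    {k r a : ℕ} (hk : k ≠ 0) (hr : a * k < r) {N : Finset (Submodule F V)} (hne : N.Nonempty)
    (hN : IsPartialSpread k N) (hdiv : IsDivisible (Nat.card F ^ r) N) :
    ∑ i ∈ range (a + 2), (Nat.card F ^ k) ^ i ≤ #N := by
  set q := Nat.card F
  set Q := q ^ k with hQ
  set Δ := q ^ (a * k + 1)
  set A := ∑ i ∈ range (a + 1), Q ^ i with hA
  set u := #N % Δ
  have hq : 2 ≤ q := Finite.one_lt_card
  have hQ2 : 2 ≤ Q := Nat.one_lt_pow hk hq
  have hΔ : Δ = q * Q ^ a := by rw [hQ, ← pow_mul', ← pow_succ']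
  have hdivΔ : IsDivisible Δ N := hdiv.of_dvd (pow_dvd_pow q hr)
  have hun : (u : ℤ) ≡ #N [ZMOD Δ] := Int.natCast_modEq_iff.mpr (Nat.mod_modEq _ _)
  have hexcess : Q * u < #N := pow_mul_lt_card hk hN.finrank_eq hne fun f =>
    (hdivΔ.modEq_card_membersIn_ker f).le.trans (Nat.mod_le _ _)
  have hgeom : ((Q : ℤ) - 1) * A = Q * (Q ^ a : ℕ) - 1 := by
    rw [hA]
    push_cast
    rw [mul_geom_sum, pow_succ']
  have hPA : Q ^ a ≤ A := single_le_sum (fun _ _ => Nat.zero_le _) (self_mem_range_succ a)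
  have hAΔ : A < Δ := hΔ ▸ geom_sum_succ_lt_mul_pow hQ2 hq a
  have hbound : (Q * A : ℤ) < #N :=
    mul_lt_card_of_excess (s := q) (by positivity) (by positivity) (by positivity)
      (mod_cast dvd_pow_self q hk) (mod_cast hΔ) hgeom (mod_cast hPA) (mod_cast hAΔ) (by positivity)
      (by lia) (by ring) hun (hN.excess_mul_le hdivΔ (by simp [Q, q]) hun)
  rw [geom_sum_succ]
  exact_mod_cast hbound

/-- If `N` is a nonempty `q^r`-divisible set of `n` `k`-subspaces of `F_q^v`, where
`r = a·k + b` with `a ≥ 1` and `0 < b < k`, then `n ≥ (q^{(a+2)k}-1)/(q^k-1)`. -/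
theorem divisible_set_lower_bound_non_divisible_case
    {F : Type} [Field F] [Fintype F] (q v k r n a b : ℕ)
    (hq : q = Fintype.card F) (hk : 1 ≤ k) (hr : 1 ≤ r)
    (ha : 1 ≤ a) (hb0 : 0 < b) (hbk : b < k) (hrab : r = a * k + b)
    (N : Finset (Submodule F (Fin v → F))) (hn : N.card = n) (hne : N.Nonempty)
    (hdim : ∀ U ∈ N, Module.finrank F ↥U = k)
    (hdisj : ∀ U ∈ N, ∀ W ∈ N, U ≠ W → U ⊓ W = ⊥)
    (hdiv : ∀ H : Submodule F (Fin v → F), Module.finrank F ↥H = v - 1 →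
      n ≡ Set.ncard {U : Submodule F (Fin v → F) | U ∈ N ∧ U ≤ H} [MOD q ^ r]) :
    (q ^ ((a + 2) * k) - 1) / (q ^ k - 1) ≤ n := by
  subst hq hn
  have hQ : 2 ≤ Fintype.card F ^ k := Nat.one_lt_pow (by lia) Fintype.one_lt_card
  rw [pow_mul', ← Nat.geomSum_eq hQ, ← Nat.card_eq_fintype_card]
  refine divisible_set_lower_bound_non_divisible_case_general (by lia) (by lia : a * k < r) hne
    ⟨hdim, fun U hU W hW hUW => disjoint_iff.mpr (hdisj U hU W hW hUW)⟩ fun H hH => ?_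
  rw [finrank_fin_fun] at hH
  rw [Nat.card_eq_fintype_card, ← Set.ncard_coe_finset (membersIn N H), coe_membersIn]
  exact hdiv H (by lia)
end

section
/- Let N be a nonempty q^r-divisible set of n k-dimensional subspaces of F_q^v with r ≥ k. If k divides r, then n ≥ (q^{k+r}−1)/(q^k−1); if k does not divide r, then writing r = a·k + b with integers a ≥ 1 and 0 < b < k, one has n ≥ (q^{(a+2)k}−1)/(q^k−1). -/
/-!
Call the number of members of `N` on which a functional `f` does not vanish the weight of `f`.
Divisibility says that `Δ` divides every weight, and pairwise trivial intersection determines the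
first two moments of the weight over the dual space: with `x = q ^ k` and `X = n * (x - 1)` they
are `X / x` and `(X ^ 2 + X) / x ^ 2`.
Weights lie in `{0, Δ, ..., m * Δ}` with `m = ⌊n / Δ⌋`, so `e = m * Δ * x - X` is nonnegative, and
since no weight lies strictly between `(m - 1) * Δ` and `m * Δ`, also `e * (Δ * x - e) ≤ X`.
Write `Δ = x ^ a * p` with `p ∣ x`, taking `p = x` when `k ∣ r`. Then `e ≡ m * p` modulo `x - 1`,
which forces `m * p ≤ e` if `X < x ^ (a + 2) - 1`, whereas `e ≤ m * Δ` always; on this range the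
quadratic inequality fails.
-/

section Weight

open Finset Module
open LinearMap (ker)

variable {F V : Type*} [Field F] [AddCommGroup V] [Module F V]

open scoped Classical in
/-- A `Δ`-divisible set of `k`-dimensional subspaces: they intersect pairwise trivially, and the
number of them contained in a hyperplane does not depend on the hyperplane modulo `Δ`. Hyperplanes
are encoded by `finrank F H + 1 = finrank F V`, which avoids truncated subtraction. -/
structure IsDivisibleSet_s10 (k Δ : ℕ) (N : Finset (Submodule F V)) : Prop where
  finrank_eq : ∀ U ∈ N, finrank F U = k
  pairwiseDisjoint : (N : Set (Submodule F V)).PairwiseDisjoint id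
  card_modEq : ∀ H : Submodule F V, finrank F H + 1 = finrank F V →
    #N ≡ #{U ∈ N | U ≤ H} [MOD Δ]

open scoped Classical in
/-- The weight of a functional `f` with respect to `N`: the number of members of `N` on which `f`
does not vanish. For `f ≠ 0` it counts the members of `N` not contained in the hyperplane
`ker f`. -/
noncomputable def functionalWeight (N : Finset (Submodule F V)) (f : Dual F V) : ℕ :=
  #{U ∈ N | ¬ U ≤ ker f}

theorem functionalWeight_le_card (N : Finset (Submodule F V)) (f : Dual F V) :
    functionalWeight N f ≤ #N := by
  classical exact card_filter_le N fun U ↦ ¬ U ≤ ker f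

theorem IsDivisibleSet_s10.dvd_functionalWeight [FiniteDimensional F V] {k Δ : ℕ}
    {N : Finset (Submodule F V)} (hN : IsDivisibleSet_s10 k Δ N) (f : Dual F V) :
    Δ ∣ functionalWeight N f := by
  classical
  rcases eq_or_ne f 0 with rfl | hf
  · simp [functionalWeight]
  · have hmod := hN.card_modEq (ker f) (Dual.finrank_ker_add_one_of_ne_zero hf)
    have hsplit := card_filter_add_card_filter_not (s := N) (fun U ↦ U ≤ ker f)
    rw [← hsplit, Nat.ModEq.comm, Nat.modEq_iff_dvd' (Nat.le_add_right _ _)] at hmod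
    simpa [functionalWeight] using hmod

section Count

variable [FiniteDimensional F V] [Fintype (Dual F V)]

open scoped Classical in
theorem pow_finrank_mul_card_le_ker (U : Submodule F V) :
    Nat.card F ^ finrank F U * #{f : Dual F V | U ≤ ker f} = Fintype.card (Dual F V) := by
  have hann : #{f : Dual F V | U ≤ ker f} = Nat.card U.dualAnnihilator := by
    rw [← Fintype.card_subtype, ← Nat.card_eq_fintype_card]
    simp [Submodule.mem_dualAnnihilator, SetLike.le_def]
  rw [hann, natCard_eq_pow_finrank (K := F) (V := U.dualAnnihilator), ← pow_add,
    Subspace.finrank_add_finrank_dualAnnihilator_eq, ← Subspace.dual_finrank_eq,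
    ← natCard_eq_pow_finrank, Nat.card_eq_fintype_card]

open scoped Classical in
theorem pow_finrank_mul_card_not_le_ker (U : Submodule F V) :
    (Nat.card F : ℤ) ^ finrank F U * #{f : Dual F V | ¬ U ≤ ker f} =
      ((Nat.card F : ℤ) ^ finrank F U - 1) * Fintype.card (Dual F V) := by
  have hU : (Nat.card F : ℤ) ^ finrank F U * #{f : Dual F V | U ≤ ker f} =
      Fintype.card (Dual F V) := mod_cast pow_finrank_mul_card_le_ker U
  have hsplit : (#{f : Dual F V | U ≤ ker f} + #{f : Dual F V | ¬ U ≤ ker f} : ℤ) =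
      Fintype.card (Dual F V) :=
    mod_cast card_filter_add_card_filter_not (s := univ) (fun f : Dual F V ↦ U ≤ ker f)
  linear_combination (Nat.card F : ℤ) ^ finrank F U * hsplit - hU

open scoped Classical in
theorem pow_finrank_mul_pow_finrank_mul_card_not_le_ker_and {U W : Submodule F V}
    (hUW : Disjoint U W) :
    (Nat.card F : ℤ) ^ finrank F U * (Nat.card F : ℤ) ^ finrank F W *
        #{f : Dual F V | ¬ U ≤ ker f ∧ ¬ W ≤ ker f} =
      ((Nat.card F : ℤ) ^ finrank F U - 1) * ((Nat.card F : ℤ) ^ finrank F W - 1) *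
        Fintype.card (Dual F V) := by
  have hsup : (Nat.card F : ℤ) ^ finrank F U * (Nat.card F : ℤ) ^ finrank F W *
      #{f : Dual F V | U ≤ ker f ∧ W ≤ ker f} = Fintype.card (Dual F V) := by
    have hfinrank := Submodule.finrank_sup_add_finrank_inf_eq U W
    rw [hUW.eq_bot, finrank_bot, add_zero] at hfinrank
    simp only [← pow_add, ← hfinrank, ← sup_le_iff]
    exact_mod_cast pow_finrank_mul_card_le_ker (U ⊔ W)
  have hsplit : (#{f : Dual F V | U ≤ ker f ∧ W ≤ ker f} : ℤ) +
      #{f : Dual F V | ¬ U ≤ ker f} + #{f : Dual F V | ¬ W ≤ ker f} =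
        Fintype.card (Dual F V) + #{f : Dual F V | ¬ U ≤ ker f ∧ ¬ W ≤ ker f} := by
    have hinter := card_union_add_card_inter ({f : Dual F V | ¬ U ≤ ker f} : Finset _)
      {f : Dual F V | ¬ W ≤ ker f}
    have hcompl := card_filter_add_card_filter_not (s := univ)
      (fun f : Dual F V ↦ U ≤ ker f ∧ W ≤ ker f)
    rw [← filter_or, ← filter_and] at hinter
    simp only [not_and_or, card_univ] at hcompl
    lia
  linear_combination hsup
    - (Nat.card F : ℤ) ^ finrank F U * (Nat.card F : ℤ) ^ finrank F W * hsplit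
    + (Nat.card F : ℤ) ^ finrank F W * pow_finrank_mul_card_not_le_ker U
    + (Nat.card F : ℤ) ^ finrank F U * pow_finrank_mul_card_not_le_ker W

theorem pow_mul_sum_functionalWeight {k : ℕ} {N : Finset (Submodule F V)}
    (hdim : ∀ U ∈ N, finrank F U = k) :
    (Nat.card F : ℤ) ^ k * ∑ f : Dual F V, (functionalWeight N f : ℤ) =
      #N * ((Nat.card F : ℤ) ^ k - 1) * Fintype.card (Dual F V) := by
  classical
  have hcount : ∑ f : Dual F V, (functionalWeight N f : ℤ) =
      ∑ U ∈ N, (#{f : Dual F V | ¬ U ≤ ker f} : ℤ) :=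
    mod_cast sum_card_bipartiteAbove_eq_sum_card_bipartiteBelow
      (fun (f : Dual F V) U ↦ ¬ U ≤ ker f)
  rw [hcount, mul_sum, mul_assoc, ← nsmul_eq_mul]
  refine sum_eq_card_nsmul fun U hU ↦ ?_
  rw [← hdim U hU, pow_finrank_mul_card_not_le_ker]

omit [FiniteDimensional F V] in
open scoped Classical in
theorem sum_functionalWeight_sq (N : Finset (Submodule F V)) :
    ∑ f : Dual F V, functionalWeight N f ^ 2 =
      ∑ U ∈ N, ∑ W ∈ N, #{f : Dual F V | ¬ U ≤ ker f ∧ ¬ W ≤ ker f} := by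
  have hsq (f : Dual F V) : functionalWeight N f ^ 2 =
      #{P ∈ N ×ˢ N | ¬ P.1 ≤ ker f ∧ ¬ P.2 ≤ ker f} := by
    rw [functionalWeight, sq, ← card_product, ← filter_product]
  have hcount := sum_card_bipartiteAbove_eq_sum_card_bipartiteBelow
    (s := (univ : Finset (Dual F V))) (t := N ×ˢ N)
    fun f P ↦ ¬ P.1 ≤ ker f ∧ ¬ P.2 ≤ ker f
  rw [sum_product] at hcount
  simpa only [hsq, bipartiteAbove, bipartiteBelow] using hcount

theorem pow_sq_mul_sum_functionalWeight_sq {k : ℕ} {N : Finset (Submodule F V)}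
    (hdim : ∀ U ∈ N, finrank F U = k) (hdisj : (N : Set (Submodule F V)).PairwiseDisjoint id) :
    ((Nat.card F : ℤ) ^ k) ^ 2 * ∑ f : Dual F V, (functionalWeight N f : ℤ) ^ 2 =
      ((#N * ((Nat.card F : ℤ) ^ k - 1)) ^ 2 + #N * ((Nat.card F : ℤ) ^ k - 1)) *
        Fintype.card (Dual F V) := by
  classical
  set x : ℤ := (Nat.card F : ℤ) ^ k with hx
  have hdiag (U) (hU : U ∈ N) : x ^ 2 * #{f : Dual F V | ¬ U ≤ ker f} =
      x * (x - 1) * Fintype.card (Dual F V) := by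
    have hU' := pow_finrank_mul_card_not_le_ker U
    rw [hdim U hU] at hU'
    linear_combination x * hU'
  have hoff (U) (hU : U ∈ N) (W) (hW : W ∈ N.erase U) :
      x ^ 2 * #{f : Dual F V | ¬ U ≤ ker f ∧ ¬ W ≤ ker f} =
        (x - 1) ^ 2 * Fintype.card (Dual F V) := by
    obtain ⟨hWU, hWN⟩ := mem_erase.1 hW
    have hUW : Disjoint U W := hdisj hU hWN hWU.symm
    simpa only [hdim U hU, hdim W hWN, ← hx, ← sq] using
      pow_finrank_mul_pow_finrank_mul_card_not_le_ker_and hUW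
  have hrow (U) (hU : U ∈ N) :
      x ^ 2 * ∑ W ∈ N, (#{f : Dual F V | ¬ U ≤ ker f ∧ ¬ W ≤ ker f} : ℤ) =
        (x * (x - 1) + (#N - 1) * (x - 1) ^ 2) * Fintype.card (Dual F V) := by
    rw [← add_sum_erase _ _ hU, mul_add, mul_sum, sum_eq_card_nsmul (hoff U hU),
      nsmul_eq_mul, cast_card_erase_of_mem hU]
    simp only [and_self]
    linear_combination hdiag U hU
  have hcount : ∑ f : Dual F V, (functionalWeight N f : ℤ) ^ 2 =
      ∑ U ∈ N, ∑ W ∈ N, (#{f : Dual F V | ¬ U ≤ ker f ∧ ¬ W ≤ ker f} : ℤ) :=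
    mod_cast sum_functionalWeight_sq N
  rw [hcount, mul_sum, sum_eq_card_nsmul hrow, nsmul_eq_mul]
  ring

end Count

namespace IsDivisibleSet_s10

variable [Finite F] [FiniteDimensional F V] {k Δ : ℕ} {N : Finset (Submodule F V)}

theorem card_mul_pow_sub_one_le (hN : IsDivisibleSet_s10 k Δ N) :
    #N * ((Nat.card F : ℤ) ^ k - 1) ≤ (#N / Δ : ℕ) * Δ * (Nat.card F : ℤ) ^ k := by
  have : Finite (Dual F V) := Module.finite_of_finite F
  cases nonempty_fintype (Dual F V)
  have hle (f : Dual F V) : functionalWeight N f ≤ #N / Δ * Δ := by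
    rw [← Nat.div_mul_cancel (hN.dvd_functionalWeight f)]
    exact Nat.mul_le_mul_right Δ (Nat.div_le_div_right (functionalWeight_le_card N f))
  have hsum : ∑ f : Dual F V, (functionalWeight N f : ℤ) ≤
      Fintype.card (Dual F V) * ((#N / Δ : ℕ) * Δ) := by
    have hsum := sum_le_card_nsmul univ (functionalWeight N) _ fun f _ ↦ hle f
    rw [card_univ, smul_eq_mul] at hsum
    exact_mod_cast hsum
  have hcard : (0 : ℤ) < Fintype.card (Dual F V) := mod_cast Fintype.card_pos
  refine le_of_mul_le_mul_right ?_ hcard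
  rw [← pow_mul_sum_functionalWeight hN.finrank_eq]
  linear_combination (Nat.card F : ℤ) ^ k * hsum

theorem quadratic_nonneg (hN : IsDivisibleSet_s10 k Δ N) (m : ℤ) :
    0 ≤ (#N * ((Nat.card F : ℤ) ^ k - 1) - m * (Δ * (Nat.card F : ℤ) ^ k)) *
        (#N * ((Nat.card F : ℤ) ^ k - 1) - (m - 1) * (Δ * (Nat.card F : ℤ) ^ k)) +
      #N * ((Nat.card F : ℤ) ^ k - 1) := by
  have : Finite (Dual F V) := Module.finite_of_finite F
  cases nonempty_fintype (Dual F V)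
  have hterm (f : Dual F V) :
      0 ≤ (functionalWeight N f - m * Δ : ℤ) * (functionalWeight N f - (m - 1) * Δ) := by
    obtain ⟨j, hj⟩ := hN.dvd_functionalWeight f
    have hconsecutive : 0 ≤ ((j : ℤ) - m) * (j - m + 1) := by
      rcases le_or_gt 0 ((j : ℤ) - m) with h | h
      · exact mul_nonneg h (by lia)
      · exact mul_nonneg_of_nonpos_of_nonpos h.le (by lia)
    rw [hj]
    push_cast
    linear_combination (Δ : ℤ) ^ 2 * hconsecutive
  have hsum := sum_nonneg fun f (_ : f ∈ univ) ↦ hterm f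
  have hexpand : ∑ f : Dual F V,
      (functionalWeight N f - m * Δ : ℤ) * (functionalWeight N f - (m - 1) * Δ) =
        ∑ f : Dual F V, (functionalWeight N f : ℤ) ^ 2 -
          (2 * m - 1) * Δ * ∑ f : Dual F V, (functionalWeight N f : ℤ) +
          m * (m - 1) * Δ ^ 2 * Fintype.card (Dual F V) := by
    have hone : (Fintype.card (Dual F V) : ℤ) = ∑ _f : Dual F V, 1 := by simp
    rw [hone, mul_sum, mul_sum, ← sum_sub_distrib, ← sum_add_distrib]
    exact sum_congr rfl fun f _ ↦ by ring
  have hcard : (0 : ℤ) < Fintype.card (Dual F V) := mod_cast Fintype.card_pos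
  refine nonneg_of_mul_nonneg_left ?_ hcard
  linear_combination ((Nat.card F : ℤ) ^ k) ^ 2 * hsum +
    ((Nat.card F : ℤ) ^ k) ^ 2 * hexpand +
    pow_sq_mul_sum_functionalWeight_sq hN.finrank_eq hN.pairwiseDisjoint -
    (2 * m - 1) * Δ * (Nat.card F : ℤ) ^ k * pow_mul_sum_functionalWeight hN.finrank_eq

end IsDivisibleSet_s10

end Weight

theorem le_of_mul_sub_one_lt_mul {p s m : ℤ} (hp : 2 ≤ p) (hs : 1 ≤ s)
    (h : m * (p * s - 1) < s * (p * s)) : m ≤ s := by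
  by_contra! hsm
  have hsp : s + 1 ≤ p * s := by nlinarith
  have : (s + 1) * (p * s - 1) ≤ m * (p * s - 1) := mul_le_mul_of_nonneg_right hsm (by lia)
  linarith

theorem mul_le_of_sub_one_dvd_sub {p s m e : ℤ} (hp : 2 ≤ p) (hm : m ≤ s) (he : 0 ≤ e)
    (hdvd : p * s - 1 ∣ m * p - e) (hms : m = s → 2 ≤ e) : m * p ≤ e := by
  by_contra! hlt
  have hgap : p * s - 1 ≤ m * p - e := Int.le_of_dvd (by lia) hdvd
  rcases hm.lt_or_eq with hm | rfl
  · have : m * p ≤ (s - 1) * p := mul_le_mul_of_nonneg_right (by lia) (by lia)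
    linarith
  · linarith [hms rfl]

theorem mul_mul_le_mul_sub {x p Q m e : ℤ} (hp : 2 ≤ p) (hQ : 0 ≤ Q) (hm : 0 ≤ m)
    (hmp : m * p ≤ x) (hle : m * p ≤ e) (heQ : e ≤ m * Q) :
    m * Q * x ≤ e * (Q * x - e) := by
  have hx : x ≤ p * (x - m) := by
    have : 0 ≤ (p - 2) * (x - m) := mul_nonneg (by lia) (by nlinarith)
    nlinarith
  calc m * Q * x ≤ m * Q * (p * (x - m)) :=
        mul_le_mul_of_nonneg_left hx (mul_nonneg hm hQ)
    _ = m * p * (Q * x - m * Q) := by ring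
    _ ≤ e * (Q * x - m * Q) := mul_le_mul_of_nonneg_right hle (by nlinarith)
    _ ≤ e * (Q * x - e) := mul_le_mul_of_nonneg_left (by lia) (by nlinarith)

theorem sub_one_dvd_mul_sub (a : ℕ) (x p m n : ℤ) :
    x - 1 ∣ m * p - (m * (x ^ a * p) * x - n * (x - 1)) := by
  obtain ⟨c, hc⟩ : x - 1 ∣ x ^ (a + 1) - 1 := sub_one_dvd_pow_sub_one x (a + 1)
  exact ⟨n - m * p * c, by linear_combination -m * p * hc⟩

theorem pow_sub_one_le_of_quadratic_nonneg {a : ℕ} {x p s m n : ℤ} (hp : 2 ≤ p) (hs : 1 ≤ s)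
    (hx : x = p * s) (hn : 1 ≤ n) (hm : m * (x ^ a * p) ≤ n)
    (hlin : n * (x - 1) ≤ m * (x ^ a * p) * x)
    (hquad : 0 ≤ (n * (x - 1) - m * (x ^ a * p * x)) *
      (n * (x - 1) - (m - 1) * (x ^ a * p * x)) + n * (x - 1)) :
    x ^ (a + 2) - 1 ≤ n * (x - 1) := by
  by_contra! hlt
  have hx2 : 2 ≤ x := by nlinarith
  obtain ⟨Q, hQ⟩ : ∃ Q, Q = x ^ a * p := ⟨_, rfl⟩
  obtain ⟨e, he⟩ : ∃ e, e = m * Q * x - n * (x - 1) := ⟨_, rfl⟩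
  rw [← hQ] at hm hlin hquad
  have hQ0 : 0 < Q := hQ ▸ by positivity
  have hsQ : s * Q * x = x ^ (a + 2) := by
    rw [hQ]
    linear_combination -x ^ (a + 1) * hx
  have hm0 : 0 < m := by
    have : 0 < m * (Q * x) := by linarith [mul_pos (a := n) (b := x - 1) (by lia) (by lia)]
    exact pos_of_mul_pos_left this (by positivity)
  have hms : m ≤ s := by
    have hmn : m * Q * (x - 1) ≤ n * (x - 1) := mul_le_mul_of_nonneg_right hm (by lia)
    have hcancel : m * (x - 1) < s * x := lt_of_mul_lt_mul_right (by linarith) hQ0.le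
    exact le_of_mul_sub_one_lt_mul hp hs (hx ▸ hcancel)
  have hmp : m * p ≤ x := by
    rw [hx, mul_comm p]
    exact mul_le_mul_of_nonneg_right hms (by lia)
  have heQ : e ≤ m * Q := by
    linear_combination he + mul_le_mul_of_nonneg_right hm (by lia : 0 ≤ x - 1)
  have hdvd : x - 1 ∣ m * p - e := by
    rw [he, hQ]
    exact sub_one_dvd_mul_sub a x p m n
  have hpe : m * p ≤ e := by
    refine mul_le_of_sub_one_dvd_sub hp hms (by lia) (hx ▸ hdvd) ?_
    rintro rfl
    lia
  have hprod := mul_mul_le_mul_sub hp hQ0.le hm0.le hmp hpe heQ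
  have hepos : 0 < e := hpe.trans_lt' (by positivity)
  have : e * (Q * x - e) ≤ n * (x - 1) := by
    rw [he]
    linear_combination hquad
  linarith

theorem IsDivisibleSet_s10.pow_sub_one_le_card_mul {F V : Type*} [Field F] [Finite F] [AddCommGroup V]
    [Module F V] [FiniteDimensional F V] {k a p : ℕ} {N : Finset (Submodule F V)}
    (hN : IsDivisibleSet_s10 k ((Nat.card F ^ k) ^ a * p) N) (hne : N.Nonempty) (hp : 2 ≤ p)
    (hpk : p ∣ Nat.card F ^ k) :
    ((Nat.card F : ℤ) ^ k) ^ (a + 2) - 1 ≤ N.card * ((Nat.card F : ℤ) ^ k - 1) := by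
  obtain ⟨s, hs⟩ := hpk
  have hs0 : s ≠ 0 := by
    rintro rfl
    exact pow_ne_zero k Nat.card_pos.ne' hs
  have hlin := hN.card_mul_pow_sub_one_le
  have hquad := hN.quadratic_nonneg (N.card / ((Nat.card F ^ k) ^ a * p) : ℕ)
  have hfloor := Nat.div_mul_le_self N.card ((Nat.card F ^ k) ^ a * p)
  rw [Nat.cast_mul, Nat.cast_pow, Nat.cast_pow] at hlin hquad
  exact pow_sub_one_le_of_quadratic_nonneg (s := s) (mod_cast hp) (mod_cast hs0.bot_lt)
    (mod_cast hs) (mod_cast hne.card_pos) (mod_cast hfloor) hlin hquad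

theorem divisible_set_card_lower_bound_large_r_general {F V : Type*} [Field F] [Finite F]
    [AddCommGroup V] [Module F V] [FiniteDimensional F V] {k r a b : ℕ}
    {N : Finset (Submodule F V)} (hN : IsDivisibleSet_s10 k (Nat.card F ^ r) N) (hne : N.Nonempty)
    (hb : 0 < b) (hbk : b ≤ k) (hr : r = a * k + b) :
    (Nat.card F ^ ((a + 2) * k) - 1) / (Nat.card F ^ k - 1) ≤ N.card := by
  have hp : 2 ≤ Nat.card F ^ b := Finite.one_lt_card.trans_le (Nat.le_self_pow hb.ne' _)
  have hN' : IsDivisibleSet_s10 k ((Nat.card F ^ k) ^ a * Nat.card F ^ b) N := by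
    rwa [← pow_mul, ← pow_add, mul_comm k, ← hr]
  have hle := hN'.pow_sub_one_le_card_mul hne hp (pow_dvd_pow _ hbk)
  refine Nat.div_le_of_le_mul ?_
  rw [mul_comm (a + 2), pow_mul, mul_comm (_ - 1)]
  zify [Nat.one_le_pow (a + 2) _ (pow_pos Nat.card_pos k), Nat.one_le_pow k _ Nat.card_pos]
  exact hle

/-- For a nonempty `q^r`-divisible set of `n` `k`-subspaces of `F_q^v` with `r ≥ k`:
if `k ∣ r` then `n ≥ (q^{k+r}-1)/(q^k-1)`; if `k ∤ r`, writing `r = a·k + b` with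
`a ≥ 1` and `0 < b < k`, then `n ≥ (q^{(a+2)k}-1)/(q^k-1)`. -/
theorem divisible_set_card_lower_bound_large_r
    {F : Type} [Field F] [Fintype F] (q v k r n : ℕ)
    (hq : q = Fintype.card F) (hk : 1 ≤ k) (hr : 1 ≤ r) (hrk : k ≤ r)
    (N : Finset (Submodule F (Fin v → F))) (hn : N.card = n) (hne : N.Nonempty)
    (hdim : ∀ U ∈ N, Module.finrank F ↥U = k)
    (hdisj : ∀ U ∈ N, ∀ W ∈ N, U ≠ W → U ⊓ W = ⊥)
    (hdiv : ∀ H : Submodule F (Fin v → F), Module.finrank F ↥H = v - 1 →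
      n ≡ Set.ncard {U : Submodule F (Fin v → F) | U ∈ N ∧ U ≤ H} [MOD q ^ r]) :
    (k ∣ r → (q ^ (k + r) - 1) / (q ^ k - 1) ≤ n) ∧
    (¬ k ∣ r → ∀ a b : ℕ, 1 ≤ a → 0 < b → b < k → r = a * k + b →
      (q ^ ((a + 2) * k) - 1) / (q ^ k - 1) ≤ n) := by
  subst hn
  rw [← Nat.card_eq_fintype_card] at hq
  subst hq
  have hN : IsDivisibleSet_s10 k (Nat.card F ^ r) N := by
    classical
    refine ⟨hdim, fun U hU W hW hUW ↦ disjoint_iff.2 (hdisj U hU W hW hUW), fun H hH ↦ ?_⟩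
    rw [Module.finrank_fin_fun] at hH
    simpa only [← Finset.coe_filter, Set.ncard_coe_finset] using hdiv H (by lia)
  refine ⟨?_, fun _ a b _ hb hbk hrab ↦
    divisible_set_card_lower_bound_large_r_general hN hne hb hbk.le hrab⟩
  rintro ⟨c, rfl⟩
  obtain ⟨a, rfl⟩ : ∃ a, c = a + 1 := ⟨c - 1, by lia⟩
  rw [show k + k * (a + 1) = (a + 2) * k by ring]
  exact divisible_set_card_lower_bound_large_r_general hN hne hk le_rfl (by ring)
end
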